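/- arXiv:math/0406360 — 2 statements merged into one kernel-verified Lean document; each statement's English description precedes it below -/
import Mathlib

section
/- Let $T_1,\dots,T_l$ be commuting invertible ergodic measure preserving transformations of a probability space $(X,\mathcal{X},\mu)$ such that $T_iT_j^{-1}$ is ergodic for all $i\neq j$. Then for all $f_1,\dots,f_l\in L^\infty(\mu)$, the averages $\frac{1}{N}\sum_{n=0}^{N-1} f_1(T_1^n x)\cdots f_l(T_l^n x)$ converge in $L^2(\mu)$ as $N\to\infty$. -/
open MeasureTheory Filter Finset

/-- The spaces `X^{[k]} = X^{2^k}`, realized as iterated squares. -/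
def HKBox (X : Type*) : ℕ → Type _
  | 0 => X
  | (k+1) => HKBox X k × HKBox X k

def HKBox.instMS (X : Type*) [m : MeasurableSpace X] : ∀ k, MeasurableSpace (HKBox X k)
  | 0 => m
  | (k+1) => @Prod.instMeasurableSpace _ _ (HKBox.instMS X k) (HKBox.instMS X k)

instance (X : Type*) [MeasurableSpace X] (k : ℕ) : MeasurableSpace (HKBox X k) :=
  HKBox.instMS X k

/-- The diagonal transformation `T^{[k]} = T × ⋯ × T` on `X^{[k]}`. -/
def HKBox.map {X : Type*} (T : X → X) : ∀ k, HKBox X k → HKBox X k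
  | 0 => T
  | (k+1) => fun p => (HKBox.map T k p.1, HKBox.map T k p.2)

/-- The σ-algebra of invariant sets of a transformation. -/
def invSigma {α : Type*} [m : MeasurableSpace α] (f : α → α) : MeasurableSpace α where
  MeasurableSet' s := MeasurableSet s ∧ f ⁻¹' s = s
  measurableSet_empty := ⟨MeasurableSet.empty, rfl⟩
  measurableSet_compl := fun s hs => ⟨hs.1.compl, by rw [Set.preimage_compl, hs.2]⟩
  measurableSet_iUnion := fun s hs => ⟨MeasurableSet.iUnion fun i => (hs i).1, by
    rw [Set.preimage_iUnion]; exact Set.iUnion_congr fun i => (hs i).2⟩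

/-- The product of `f` over all `2^k` coordinates of `X^{[k]}`. -/
def HKBox.prodFun {X : Type*} (f : X → ℝ) : ∀ k, HKBox X k → ℝ
  | 0 => f
  | (k+1) => fun p => HKBox.prodFun f k p.1 * HKBox.prodFun f k p.2

/-- `IsHKSeq μ T ν` asserts that `ν k` is the Host–Kra box measure `μ^{[k]}` of the
system `(X, μ, T)`: `ν 0 = μ` and `ν (k+1)` is the relatively independent square of
`ν k` over the σ-algebra of `T^{[k]}`-invariant sets. -/
def IsHKSeq {X : Type*} [MeasurableSpace X] (μ : Measure X) (T : X → X)
    (ν : ∀ k, Measure (HKBox X k)) : Prop :=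
  ν 0 = μ ∧ ∀ k, (∀ F' F'' : HKBox X k → ℝ, Measurable F' → Measurable F'' →
    (∃ C, ∀ x, |F' x| ≤ C) → (∃ C, ∀ x, |F'' x| ≤ C) →
    ∫ p, F' p.1 * F'' p.2 ∂(ν (k+1)) =
      ∫ x, ((ν k)[F' | invSigma (HKBox.map T k)]) x *
        ((ν k)[F'' | invSigma (HKBox.map T k)]) x ∂(ν k))

/-- The `k`-th Host–Kra seminorm of `f`, computed from a sequence `ν` of box measures:
`⦀f⦀_k = (∫ ∏_{ε} f(x_ε) dν k)^{1/2^k}`. -/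
noncomputable def HKseminorm {X : Type*} [MeasurableSpace X]
    (ν : ∀ k, Measure (HKBox X k)) (k : ℕ) (f : X → ℝ) : ℝ :=
  (∫ x, HKBox.prodFun f k x ∂(ν k)) ^ (((2 : ℝ) ^ k)⁻¹)

/-!
Let `S` be one of the transformations, and let `P n` be the product over the others in the average,
acting on `L²` by multiplication. The averages are `B N v` for the uniformly bounded operators
`B N = N⁻¹ ∑_{n < N} P n * S ^ n`, so the vectors along which `B N` is Cauchy form a closed
subspace. If `w` is orthogonal to it and, for all `v` in a dense set, it contains every weak
ultralimit `z` of `(B N)† (B N v)`, then `(B N)† (B N w)` tends weakly to `0`, so `B N w → 0` and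
`w = 0`.

For such a `z` and bounded `v`, `c`, pairing `P l * S ^ l • z` with `c` gives the ultralimit of
`N⁻¹ ∑_{m < N} ⟪b N * (P (m + l) * S ^ m • P l), S ^ m • c⟫`, where `b N = B N v` is bounded
uniformly in `N`. By Cauchy–Schwarz and duality, `B L z - B L' z` is therefore controlled by the
difference of the averages over `l < L` and `l < L'` of the correlations
`m ↦ P (m + l) * S ^ m • P l`, measured in the ultralimit of the `N⁻¹ ∑_{m < N} ⟪F m, F' m⟫` on
bounded sequences. This is again a system on which the group acts, by acting termwise, and
`P (m + l) * S ^ m • P l` is a product of terms `T i ^ l • (T i ^ m • f i * S ^ m • f i)`, so in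
it the averages over `l` are multiple averages without `S`: induct on the number of
transformations. Since the induction leaves the original probability space, it is run for
abstract systems `L^∞ → L²`.
-/

universe u v

section Cesaro

variable {V W : Type*} [AddCommGroup V] [Module ℝ V] [AddCommGroup W] [Module ℝ W]

/-- The average `N⁻¹ ∑_{n < N} x n`, as a linear map in the sequence `x`; it is `0` for `N = 0`. -/
noncomputable def cesaro (N : ℕ) : (ℕ → V) →ₗ[ℝ] V :=
  (N : ℝ)⁻¹ • ∑ n ∈ range N, LinearMap.proj n

theorem cesaro_apply (N : ℕ) (x : ℕ → V) : cesaro N x = (N : ℝ)⁻¹ • ∑ n ∈ range N, x n := by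
  simp [cesaro]

theorem map_cesaro (φ : V →ₗ[ℝ] W) (N : ℕ) (x : ℕ → V) :
    φ (cesaro N x) = cesaro N fun n => φ (x n) := by
  simp only [cesaro_apply, map_smul, map_sum]

theorem cesaro_const {N : ℕ} (hN : N ≠ 0) (v : V) : cesaro N (fun _ => v) = v := by
  rw [cesaro_apply, sum_const, card_range, ← Nat.cast_smul_eq_nsmul ℝ, smul_smul,
    inv_mul_cancel₀ (Nat.cast_ne_zero.mpr hN), one_smul]

theorem cesaro_mono {x y : ℕ → ℝ} (h : ∀ n, x n ≤ y n) (N : ℕ) : cesaro N x ≤ cesaro N y := by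
  simp only [cesaro_apply]
  gcongr with n
  exact h n

theorem cesaro_nonneg {x : ℕ → ℝ} (h : ∀ n, 0 ≤ x n) (N : ℕ) : 0 ≤ cesaro N x :=
  (map_zero (cesaro N)).symm.trans_le (cesaro_mono h N)

theorem sq_cesaro_le (N : ℕ) (x : ℕ → ℝ) : cesaro N x ^ 2 ≤ cesaro N fun n => x n ^ 2 := by
  rcases eq_or_ne N 0 with rfl | hN
  · simp [cesaro_apply]
  · have : (0 : ℝ) < N := by positivity
    have h := sq_sum_le_card_mul_sum_sq (s := range N) (f := x)
    rw [card_range] at h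
    simp only [cesaro_apply, smul_eq_mul, mul_pow]
    calc (N : ℝ)⁻¹ ^ 2 * (∑ n ∈ range N, x n) ^ 2
        ≤ (N : ℝ)⁻¹ ^ 2 * (N * ∑ n ∈ range N, x n ^ 2) := by gcongr
      _ = (N : ℝ)⁻¹ * ∑ n ∈ range N, x n ^ 2 := by field_simp

variable {E : Type*} [SeminormedAddCommGroup E] [NormedSpace ℝ E]

theorem norm_cesaro_le_cesaro_norm (N : ℕ) (x : ℕ → E) :
    ‖cesaro N x‖ ≤ cesaro N fun n => ‖x n‖ := by
  rw [cesaro_apply, cesaro_apply, norm_smul, norm_inv, Real.norm_natCast, smul_eq_mul]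
  gcongr
  exact norm_sum_le _ _

theorem norm_cesaro_le {x : ℕ → E} {C : ℝ} (h : ∀ n, ‖x n‖ ≤ C) (N : ℕ) : ‖cesaro N x‖ ≤ C := by
  rcases eq_or_ne N 0 with rfl | hN
  · simpa [cesaro_apply] using (norm_nonneg _).trans (h 0)
  · exact (norm_cesaro_le_cesaro_norm N x).trans
      ((cesaro_mono h N).trans_eq (cesaro_const hN C))

theorem tendsto_cesaro {ι : Type*} {F : Filter ι} {x : ι → ℕ → E} {a : ℕ → E}
    (h : ∀ n, Tendsto (fun i => x i n) F (nhds (a n))) (N : ℕ) :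
    Tendsto (fun i => cesaro N (x i)) F (nhds (cesaro N a)) := by
  simp only [cesaro_apply]
  exact (tendsto_finsetSum _ fun n _ => h n).const_smul _

theorem tendsto_cesaro_add {F : Filter ℕ} (hF : F ≤ atTop) {x : ℕ → ℕ → E} {C : ℝ}
    (hx : ∀ N n, ‖x N n‖ ≤ C) {a : E} (ha : Tendsto (fun N => cesaro N (x N)) F (nhds a)) (l : ℕ) :
    Tendsto (fun N => cesaro N fun n => x N (n + l)) F (nhds a) := by
  induction l with
  | zero => exact ha
  | succ l ih =>
    have boundary : Tendsto (fun N : ℕ => (N : ℝ)⁻¹ • (x N (N + l) - x N l)) F (nhds 0) :=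
      (tendsto_inv_atTop_nhds_zero_nat.mono_left hF).zero_smul_isBoundedUnder_le
        (isBoundedUnder_of ⟨C + C, fun N => (norm_sub_le _ _).trans (add_le_add (hx _ _) (hx _ _))⟩)
    have telescope (N : ℕ) : cesaro N (fun n => x N (n + l)) + (N : ℝ)⁻¹ • (x N (N + l) - x N l)
        = cesaro N fun n => x N (n + (l + 1)) := by
      have := sum_range_sub (fun n => x N (n + l)) N
      rw [zero_add] at this
      rw [← this, cesaro_apply, cesaro_apply, ← smul_add, ← sum_add_distrib]
      simp only [add_sub_cancel, add_right_comm, add_assoc]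
    simpa only [telescope, add_zero] using ih.add boundary

end Cesaro

open scoped InnerProductSpace

section WeakLimits

theorem exists_tendsto_of_norm_le {ι V : Type*} [SeminormedAddCommGroup V] [ProperSpace V]
    (U : Ultrafilter ι) {x : ι → V} {C : ℝ} (hx : ∀ i, ‖x i‖ ≤ C) :
    ∃ a, Tendsto x U (nhds a) := by
  obtain ⟨a, -, ha⟩ := (isCompact_closedBall (0 : V) C).ultrafilter_le_nhds (U.map x)
    (le_principal_iff.mpr (mem_map.mpr (Eventually.of_forall fun i => by simpa using hx i)))
  exact ⟨a, ha⟩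

variable {H : Type*} [NormedAddCommGroup H] [InnerProductSpace ℝ H]

theorem exists_tendsto_inner_of_norm_le [CompleteSpace H] {ι : Type*} (U : Ultrafilter ι)
    {y : ι → H} {C : ℝ} (hy : ∀ i, ‖y i‖ ≤ C) :
    ∃ z, ∀ b, Tendsto (fun i => ⟪y i, b⟫_ℝ) U (nhds ⟪z, b⟫_ℝ) := by
  let φ (i : ι) : WeakDual ℝ H := StrongDual.toWeakDual (InnerProductSpace.toDual ℝ H (y i))
  obtain ⟨f, -, hf⟩ := (WeakDual.isCompact_closedBall (𝕜 := ℝ) (E := H) 0 C).ultrafilter_le_nhds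
    (U.map φ) (le_principal_iff.mpr (mem_map.mpr (Eventually.of_forall fun i => by
      simpa [φ] using hy i)))
  refine ⟨(InnerProductSpace.toDual ℝ H).symm (WeakDual.toStrongDual f), fun b => ?_⟩
  rw [InnerProductSpace.toDual_symm_apply]
  exact ((WeakDual.eval_continuous b).tendsto f).comp hf

theorem norm_le_of_forall_abs_inner_le {D : Set H} (hD : Dense D) {x : H} {M : ℝ} (hM : 0 ≤ M)
    (h : ∀ y ∈ D, |⟪x, y⟫_ℝ| ≤ M * ‖y‖) : ‖x‖ ≤ M := by
  rw [← innerSL_apply_norm ℝ x]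
  refine ContinuousLinearMap.opNorm_le_bound _ hM fun y => ?_
  exact hD.induction (P := fun y => |⟪x, y⟫_ℝ| ≤ M * ‖y‖) h
    (isClosed_le (by fun_prop) (by fun_prop)) y

theorem cauchySeq_of_forall_approx {α : Type*} [PseudoMetricSpace α] {u : ℕ → α}
    (h : ∀ ε > 0, ∃ v : ℕ → α, CauchySeq v ∧ ∀ n, dist (u n) (v n) ≤ ε) : CauchySeq u := by
  refine Metric.cauchySeq_iff.mpr fun ε hε => ?_
  obtain ⟨v, hv, huv⟩ := h (ε / 4) (by positivity)
  obtain ⟨N, hN⟩ := Metric.cauchySeq_iff.mp hv (ε / 4) (by positivity)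
  refine ⟨N, fun m hm n hn => ?_⟩
  calc dist (u m) (u n)
      ≤ dist (u m) (v m) + dist (v m) (v n) + dist (v n) (u n) := dist_triangle4 _ _ _ _
    _ ≤ ε / 4 + ε / 4 + ε / 4 := by
        gcongr
        exacts [huv m, (hN m hm n hn).le, (dist_comm _ _).trans_le (huv n)]
    _ < ε := by linarith

theorem cauchySeq_of_dist_le_mul_dist {α β : Type*} [PseudoMetricSpace α] [PseudoMetricSpace β]
    {u : ℕ → α} {v : ℕ → β} {D : ℝ} (h : ∀ m n, dist (u m) (u n) ≤ D * dist (v m) (v n))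
    (hv : CauchySeq v) : CauchySeq u := by
  rw [cauchySeq_iff_tendsto_dist_atTop_0] at hv ⊢
  exact squeeze_zero (fun _ => dist_nonneg) (fun p => h p.1 p.2) (by simpa using hv.const_mul D)

/-- The subspace of the vectors `x` for which the sequence `B N x` is Cauchy. -/
def cauchySubmodule (B : ℕ → H →L[ℝ] H) : Submodule ℝ H where
  carrier := {x | CauchySeq fun N => B N x}
  zero_mem' := by simpa using cauchySeq_const (0 : H)
  add_mem' hx hy := by simpa only [Set.mem_ofPred_eq, map_add] using! CauchySeq.add hx hy
  smul_mem' c x hx := by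
    simpa only [Set.mem_ofPred_eq, map_smul]
      using! (uniformContinuous_const_smul c).comp_cauchySeq hx

theorem isClosed_cauchySubmodule {B : ℕ → H →L[ℝ] H} {C : ℝ} (hB : ∀ N, ‖B N‖ ≤ C) :
    IsClosed (cauchySubmodule B : Set H) := by
  refine isClosed_of_closure_subset fun x hx => cauchySeq_of_forall_approx fun ε hε => ?_
  have hC : 0 ≤ C := (norm_nonneg _).trans (hB 0)
  obtain ⟨y, hy, hxy⟩ := Metric.mem_closure_iff.mp hx (ε / (C + 1)) (by positivity)
  refine ⟨fun N => B N y, hy, fun N => ?_⟩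
  calc dist (B N x) (B N y) ≤ (C + 1) * dist x y := by
        rw [dist_eq_norm, dist_eq_norm, ← map_sub]
        exact (B N).le_of_opNorm_le ((hB N).trans (by linarith)) _
    _ ≤ ε := by
        rw [lt_div_iff₀ (by positivity), mul_comm] at hxy
        exact hxy.le

/-- `z` is the weak limit of `(B N)† (B N v)` along the ultrafilter `U`. -/
def IsWeakLimit (B : ℕ → H →L[ℝ] H) (U : Ultrafilter ℕ) (v z : H) : Prop :=
  ∀ b, Tendsto (fun N => ⟪B N v, B N b⟫_ℝ) U (nhds ⟪z, b⟫_ℝ)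

variable [CompleteSpace H] {B : ℕ → H →L[ℝ] H} {C : ℝ}

theorem exists_isWeakLimit (hB : ∀ N, ‖B N‖ ≤ C) (U : Ultrafilter ℕ) (v : H) :
    ∃ z, IsWeakLimit B U v z := by
  have hC : 0 ≤ C := (norm_nonneg _).trans (hB 0)
  obtain ⟨z, hz⟩ := exists_tendsto_inner_of_norm_le U (y := fun N => (B N).adjoint (B N v))
    (C := C * (C * ‖v‖)) fun N =>
      ((B N).adjoint.le_of_opNorm_le (by simpa using hB N) _).trans
        (mul_le_mul_of_nonneg_left ((B N).le_of_opNorm_le (hB N) v) hC)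
  exact ⟨z, fun b => by simpa only [ContinuousLinearMap.adjoint_inner_left] using hz b⟩

theorem cauchySeq_apply_of_isWeakLimit (hB : ∀ N, ‖B N‖ ≤ C) {D : Set H} (hD : Dense D)
    (h : ∀ v ∈ D, ∀ U : Ultrafilter ℕ, ↑U ≤ (atTop : Filter ℕ) → ∀ z, IsWeakLimit B U v z →
      CauchySeq fun N => B N z) (x : H) :
    CauchySeq fun N => B N x := by
  have := (isClosed_cauchySubmodule hB).completeSpace_coe
  suffices (cauchySubmodule B)ᗮ = ⊥ from
    (Submodule.orthogonal_eq_bot_iff.mp this).ge (Submodule.mem_top (x := x))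
  refine (Submodule.eq_bot_iff _).mpr fun w hw => ?_
  have norm_tendsto : Tendsto (fun N => B N w) atTop (nhds 0) := by
    refine (tendsto_iff_ultrafilter _ _ _).mpr fun U hU => ?_
    obtain ⟨z, hz⟩ := exists_isWeakLimit hB U w
    have z_eq_zero : z = 0 := hD.eq_zero_of_inner_left ℝ fun v hv => by
      obtain ⟨z', hz'⟩ := exists_isWeakLimit hB U v
      have swap := (hz v).congr fun N => real_inner_comm _ _
      exact (tendsto_nhds_unique swap (hz' w)).trans (hw z' (h v hv U hU z' hz'))
    have hsq := hz w
    simp only [z_eq_zero, inner_zero_left, real_inner_self_eq_norm_sq] at hsq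
    exact tendsto_zero_iff_norm_tendsto_zero.mpr (by simpa using hsq.sqrt)
  exact inner_self_eq_zero.mp (hw w norm_tendsto.cauchySeq)

end WeakLimits

section MulBound

variable {A H : Type*} [CommRing A] [Algebra ℝ A] [NormedAddCommGroup H] [InnerProductSpace ℝ H]

/-- Multiplication by `a` has operator norm at most `C` for the seminorm induced by `ι`. -/
def MulBound (ι : A →ₗ[ℝ] H) (C : NNReal) (a : A) : Prop :=
  ∀ b, ‖ι (a * b)‖ ≤ C * ‖ι b‖

variable {ι : A →ₗ[ℝ] H} {C D : NNReal} {a b : A}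

theorem MulBound.add (ha : MulBound ι C a) (hb : MulBound ι D b) :
    MulBound ι (C + D) (a + b) := fun x => by
  rw [add_mul, map_add, NNReal.coe_add, add_mul]
  exact norm_add_le_of_le (ha x) (hb x)

theorem MulBound.mul (ha : MulBound ι C a) (hb : MulBound ι D b) :
    MulBound ι (C * D) (a * b) := fun x => by
  rw [mul_assoc, NNReal.coe_mul, mul_assoc]
  exact (ha _).trans (by gcongr; exact hb x)

theorem mulBound_algebraMap (r : ℝ) : MulBound ι ‖r‖₊ (algebraMap ℝ A r) := fun x => by
  rw [← Algebra.smul_def, map_smul, norm_smul, coe_nnnorm]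

theorem mulBound_cesaro {P : ℕ → A} (h : ∀ n, MulBound ι C (P n)) (N : ℕ) :
    MulBound ι C (cesaro N P) := fun x => by
  rw [show cesaro N P * x = LinearMap.mulRight ℝ x (cesaro N P) from rfl, map_cesaro, map_cesaro]
  exact norm_cesaro_le (fun n => h n x) N

/-- The sequences in `A` acting by multiplication with uniformly bounded operator norms. -/
def boundedSeq (ι : A →ₗ[ℝ] H) : Subalgebra ℝ (ℕ → A) where
  carrier := {F | ∃ C, ∀ m, MulBound ι C (F m)}
  mul_mem' := fun ⟨_, hF⟩ ⟨_, hF'⟩ => ⟨_, fun m => (hF m).mul (hF' m)⟩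
  add_mem' := fun ⟨_, hF⟩ ⟨_, hF'⟩ => ⟨_, fun m => (hF m).add (hF' m)⟩
  algebraMap_mem' r := ⟨_, fun _ => mulBound_algebraMap r⟩

end MulBound

/-- The linear map `ι` is an abstract measure preserving `G`-system: `A` plays the role of `L^∞`,
`H` that of `L²`, and `ι` that of the inclusion `L^∞ ⊆ L²`. -/
class IsL2System (G : Type*) {A H : Type*} [Group G] [CommRing A] [Algebra ℝ A]
    [MulSemiringAction G A] [NormedAddCommGroup H] [InnerProductSpace ℝ H]
    (ι : A →ₗ[ℝ] H) : Prop where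
  denseRange : DenseRange ι
  inner_mul_left (a b c : A) : ⟪ι (a * b), ι c⟫_ℝ = ⟪ι b, ι (a * c)⟫_ℝ
  inner_smul_smul (g : G) (a b : A) : ⟪ι (g • a), ι (g • b)⟫_ℝ = ⟪ι a, ι b⟫_ℝ
  exists_mulBound (a : A) : ∃ C, MulBound ι C a

section GNS

variable {G : Type*} [Group G]

theorem exists_isL2System_of_core {A : Type u} [CommRing A] [Algebra ℝ A] [MulSemiringAction G A]
    (c : PreInnerProductSpace.Core ℝ A)
    (mul_left : ∀ a b d : A, c.inner (a * b) d = c.inner b (a * d))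
    (smul_smul : ∀ (g : G) (a b : A), c.inner (g • a) (g • b) = c.inner a b)
    (mul_bound : ∀ a : A, ∃ C : NNReal, ∀ b, c.inner (a * b) (a * b) ≤ C ^ 2 * c.inner b b) :
    ∃ (H : Type u) (_ : NormedAddCommGroup H) (_ : InnerProductSpace ℝ H) (_ : CompleteSpace H)
      (ι : A →ₗ[ℝ] H), IsL2System G ι ∧ ∀ a b, ⟪ι a, ι b⟫_ℝ = c.inner a b := by
  let : SeminormedAddCommGroup A := InnerProductSpace.Core.toSeminormedAddCommGroup (𝕜 := ℝ)
  let : InnerProductSpace ℝ A := InnerProductSpace.ofCore c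
  let ι : A →ₗ[ℝ] UniformSpace.Completion A := (UniformSpace.Completion.toComplₗᵢ).toLinearMap
  have inner_ι (a b : A) : ⟪ι a, ι b⟫_ℝ = c.inner a b :=
    UniformSpace.Completion.inner_coe a b
  refine ⟨UniformSpace.Completion A, inferInstance, inferInstance, inferInstance, ι,
    { denseRange := UniformSpace.Completion.denseRange_coe
      inner_mul_left := fun a b d => ?_
      inner_smul_smul := fun g a b => ?_
      exists_mulBound := fun a => ?_ }, inner_ι⟩
  · exact (inner_ι _ _).trans ((mul_left a b d).trans (inner_ι _ _).symm)
  · exact (inner_ι _ _).trans ((smul_smul g a b).trans (inner_ι _ _).symm)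
  · obtain ⟨C, hC⟩ := mul_bound a
    refine ⟨C, fun b => (pow_le_pow_iff_left₀ (norm_nonneg _) (by positivity) two_ne_zero).mp ?_⟩
    rw [mul_pow, ← real_inner_self_eq_norm_sq, ← real_inner_self_eq_norm_sq, inner_ι, inner_ι]
    exact hC b

end GNS

section BoundedSeq

variable {G A H : Type*} [Group G] [CommRing A] [Algebra ℝ A] [MulSemiringAction G A]
  [NormedAddCommGroup H] [InnerProductSpace ℝ H] {ι : A →ₗ[ℝ] H} [IsL2System G ι]

theorem norm_map_group_smul (ι : A →ₗ[ℝ] H) [IsL2System G ι] (g : G) (a : A) :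
    ‖ι (g • a)‖ = ‖ι a‖ := by
  rw [norm_eq_sqrt_real_inner, norm_eq_sqrt_real_inner, IsL2System.inner_smul_smul]

theorem MulBound.group_smul {C : NNReal} {a : A} (ha : MulBound ι C a) (g : G) :
    MulBound ι C (g • a) := fun x => by
  calc ‖ι (g • a * x)‖ = ‖ι (a * g⁻¹ • x)‖ := by
        rw [← norm_map_group_smul ι g (a * _), smul_mul', smul_inv_smul]
    _ ≤ C * ‖ι (g⁻¹ • x)‖ := ha _
    _ = C * ‖ι x‖ := by rw [norm_map_group_smul ι]

instance : MulSemiringAction G (boundedSeq ι) where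
  smul g F := ⟨fun m => g • F.1 m, F.2.imp fun _ hF m => (hF m).group_smul g⟩
  one_smul F := Subtype.ext (funext fun m => one_smul G (F.1 m))
  mul_smul g h F := Subtype.ext (funext fun m => mul_smul g h (F.1 m))
  smul_zero g := Subtype.ext (funext fun _ => smul_zero g)
  smul_add g F F' := Subtype.ext (funext fun m => smul_add g (F.1 m) (F'.1 m))
  smul_one g := Subtype.ext (funext fun _ => smul_one g)
  smul_mul g F F' := Subtype.ext (funext fun m => smul_mul' g (F.1 m) (F'.1 m))

instance [SMulCommClass G ℝ A] : SMulCommClass G ℝ (boundedSeq ι) where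
  smul_comm g r F := Subtype.ext (funext fun m => smul_comm g r (F.1 m))

theorem exists_tendsto_cesaro_inner (U : Ultrafilter ℕ) (F F' : boundedSeq ι) :
    ∃ a, Tendsto (fun N => cesaro N fun m => ⟪ι (F.1 m), ι (F'.1 m)⟫_ℝ) U (nhds a) := by
  obtain ⟨C, hC⟩ := F.2
  obtain ⟨D, hD⟩ := F'.2
  have hbound {C : NNReal} {a : A} (ha : MulBound ι C a) : ‖ι a‖ ≤ C * ‖ι 1‖ := by
    simpa using ha 1
  exact exists_tendsto_of_norm_le U (norm_cesaro_le fun m => (norm_inner_le_norm _ _).trans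
    (mul_le_mul (hbound (hC m)) (hbound (hD m)) (norm_nonneg _) (by positivity)))

end BoundedSeq

theorem exists_limit_isL2System {G : Type*} {A H : Type u} [Group G] [CommRing A] [Algebra ℝ A]
    [MulSemiringAction G A] [NormedAddCommGroup H] [InnerProductSpace ℝ H]
    (ι : A →ₗ[ℝ] H) [IsL2System G ι] (U : Ultrafilter ℕ) :
    ∃ (K : Type u) (_ : NormedAddCommGroup K) (_ : InnerProductSpace ℝ K) (_ : CompleteSpace K)
      (j : boundedSeq ι →ₗ[ℝ] K), IsL2System G j ∧ ∀ F F' : boundedSeq ι,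
        Tendsto (fun N => cesaro N fun m => ⟪ι (F.1 m), ι (F'.1 m)⟫_ℝ) U (nhds ⟪j F, j F'⟫_ℝ) := by
  choose L hL using exists_tendsto_cesaro_inner (ι := ι) U
  have L_eq {F F' : boundedSeq ι} {x : ℕ → ℝ} {a : ℝ}
      (h : ∀ m, ⟪ι (F.1 m), ι (F'.1 m)⟫_ℝ = x m) (ha : Tendsto (fun N => cesaro N x) U (nhds a)) :
      L F F' = a := by
    rw [← funext h] at ha
    exact tendsto_nhds_unique (hL F F') ha
  let c : PreInnerProductSpace.Core ℝ (boundedSeq ι) :=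
    { inner := L
      conj_inner_symm := fun F F' => L_eq (fun m => real_inner_comm _ _) (hL F F')
      re_inner_nonneg := fun F => ge_of_tendsto (hL F F)
        (Eventually.of_forall fun N => cesaro_nonneg (fun m => real_inner_self_nonneg) N)
      add_left := fun F F' K => L_eq
        (fun m => (congrArg (⟪·, ι (K.1 m)⟫_ℝ) (map_add ι _ _)).trans (inner_add_left _ _ _))
        (by simpa only [← map_add] using! (hL F K).add (hL F' K))
      smul_left := fun F K r => L_eq
        (fun m => (congrArg (⟪·, ι (K.1 m)⟫_ℝ) (map_smul ι _ _)).trans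
          (real_inner_smul_left _ _ _))
        (by simpa only [← map_smul] using! (hL F K).const_smul r) }
  obtain ⟨K, _, _, _, j, hj, inner_j⟩ := exists_isL2System_of_core (G := G) c
    (fun F F' K => L_eq (fun m => IsL2System.inner_mul_left G _ _ _) (hL F' (F * K)))
    (fun g F F' => L_eq (fun m => IsL2System.inner_smul_smul g _ _) (hL F F'))
    (fun F => F.2.imp fun C hC F' => le_of_tendsto_of_tendsto' (hL _ _)
      ((hL F' F').const_smul ((C : ℝ) ^ 2)) fun N => by
        rw [← map_smul]
        refine cesaro_mono (fun m => ?_) N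
        rw [Pi.smul_apply, smul_eq_mul, real_inner_self_eq_norm_sq, real_inner_self_eq_norm_sq,
          ← mul_pow]
        exact pow_le_pow_left₀ (norm_nonneg _) (hC m _) 2)
  exact ⟨K, _, _, ‹_›, j, hj, fun F F' => by rw [inner_j]; exact hL F F'⟩

section Twist

variable {G : Type v} {A H : Type u} [Group G] [CommRing A] [Algebra ℝ A] [MulSemiringAction G A]
  [NormedAddCommGroup H] [InnerProductSpace ℝ H]

variable {ι : A →ₗ[ℝ] H}

/-- The functional `R ↦ N⁻¹ ∑_{m < N} ⟪b * R m, S ^ m • c⟫` on sequences in `A`. -/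
noncomputable def orbitPairing (ι : A →ₗ[ℝ] H) (S : G) (b c : A) (N : ℕ) : (ℕ → A) →ₗ[ℝ] ℝ :=
  cesaro N ∘ₗ LinearMap.pi fun m =>
    (innerₗ H).flip (ι (S ^ m • c)) ∘ₗ ι ∘ₗ LinearMap.mulLeft ℝ b ∘ₗ LinearMap.proj m

theorem orbitPairing_apply (S : G) (b c : A) (N : ℕ) (R : ℕ → A) :
    orbitPairing ι S b c N R = cesaro N fun m => ⟪ι (b * R m), ι (S ^ m • c)⟫_ℝ := rfl

/-- The van der Corput correlation `m ↦ P (m + l) * S ^ m • P l`. -/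
def correlation [IsL2System G ι] (P : boundedSeq ι) (S : G) (l : ℕ) : boundedSeq ι :=
  ⟨fun m => P.1 (m + l) * S ^ m • P.1 l, by
    obtain ⟨C, hC⟩ := P.2
    exact ⟨C * C, fun m => (hC _).mul ((hC l).group_smul _)⟩⟩

theorem orbitPairing_sq_le [IsL2System G ι] (S : G) {C : NNReal} {b : A} (hb : MulBound ι C b)
    (c : A) (N : ℕ) (R : ℕ → A) :
    orbitPairing ι S b c N R ^ 2 ≤
      (C * ‖ι c‖) ^ 2 * cesaro N fun m => ⟪ι (R m), ι (R m)⟫_ℝ := by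
  have pointwise (m : ℕ) :
      ⟪ι (b * R m), ι (S ^ m • c)⟫_ℝ ^ 2 ≤ (C * ‖ι c‖) ^ 2 * ⟪ι (R m), ι (R m)⟫_ℝ := by
    rw [real_inner_self_eq_norm_sq, ← mul_pow, ← sq_abs]
    gcongr
    calc |⟪ι (b * R m), ι (S ^ m • c)⟫_ℝ| ≤ ‖ι (b * R m)‖ * ‖ι (S ^ m • c)‖ :=
          abs_real_inner_le_norm _ _
      _ ≤ C * ‖ι (R m)‖ * ‖ι c‖ := by
          rw [norm_map_group_smul ι]
          gcongr
          exact hb _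
      _ = C * ‖ι c‖ * ‖ι (R m)‖ := mul_right_comm _ _ _
  calc orbitPairing ι S b c N R ^ 2
      ≤ cesaro N fun m => ⟪ι (b * R m), ι (S ^ m • c)⟫_ℝ ^ 2 := sq_cesaro_le N _
    _ ≤ cesaro N fun m => (C * ‖ι c‖) ^ 2 * ⟪ι (R m), ι (R m)⟫_ℝ := cesaro_mono pointwise N
    _ = (C * ‖ι c‖) ^ 2 * cesaro N fun m => ⟪ι (R m), ι (R m)⟫_ℝ :=
        map_smul (cesaro N) ((C * ‖ι c‖) ^ 2) _

variable [SMulCommClass G ℝ A]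

/-- The twisted Koopman operator `x ↦ a * g • x` on `A`. -/
def mulSMul (a : A) (g : G) : A →ₗ[ℝ] A :=
  LinearMap.mulLeft ℝ a ∘ₗ DistribSMul.toLinearMap ℝ A g

theorem MulBound.norm_map_mulSMul_le [IsL2System G ι] {C : NNReal} {a : A} (ha : MulBound ι C a)
    (g : G) (x : A) : ‖(ι ∘ₗ mulSMul a g) x‖ ≤ C * ‖ι x‖ :=
  (ha _).trans_eq (by rw [DistribSMul.toLinearMap_apply, norm_map_group_smul ι])

variable [CompleteSpace H]

/-- The extension of `x ↦ a * g • x` to an operator on `H`. -/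
noncomputable def twist (ι : A →ₗ[ℝ] H) (a : A) (g : G) : H →L[ℝ] H :=
  (ι ∘ₗ mulSMul a g).extendOfNorm ι

/-- The averages `N⁻¹ ∑_{n < N} P n * S ^ n • x`, as operators on `H`. -/
noncomputable def twistAverage (P : boundedSeq ι) (S : G) (N : ℕ) : H →L[ℝ] H :=
  cesaro N fun n => twist ι (P.1 n) (S ^ n)

theorem twistAverage_apply (P : boundedSeq ι) (S : G) (N : ℕ) (x : H) :
    twistAverage P S N x = cesaro N fun n => twist ι (P.1 n) (S ^ n) x :=
  map_cesaro (ContinuousLinearMap.apply ℝ H x).toLinearMap N _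

variable [IsL2System G ι] {C : NNReal} {a : A}

theorem twist_map (a : A) (g : G) (x : A) : twist ι a g (ι x) = ι (a * g • x) := by
  obtain ⟨C, hC⟩ := IsL2System.exists_mulBound G (ι := ι) a
  exact LinearMap.extendOfNorm_eq (f := ι ∘ₗ mulSMul a g) (IsL2System.denseRange G)
    ⟨C, hC.norm_map_mulSMul_le g⟩ x

theorem MulBound.norm_twist_le (ha : MulBound ι C a) (g : G) : ‖twist ι a g‖ ≤ C :=
  LinearMap.opNorm_extendOfNorm_le (IsL2System.denseRange G (ι := ι)) C.2 (ha.norm_map_mulSMul_le g)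

theorem inner_twist_map (a : A) (g : G) (x : H) (b : A) :
    ⟪twist ι a g x, ι b⟫_ℝ = ⟪x, ι (g⁻¹ • (a * b))⟫_ℝ := by
  refine (IsL2System.denseRange G (ι := ι)).induction_on x
    (isClosed_eq (by fun_prop) (by fun_prop)) fun y => ?_
  rw [twist_map, IsL2System.inner_mul_left G, ← IsL2System.inner_smul_smul g y, smul_inv_smul]

theorem exists_norm_twistAverage_le (P : boundedSeq ι) (S : G) :
    ∃ C, ∀ N, ‖twistAverage P S N‖ ≤ C := by
  obtain ⟨C, hC⟩ := P.2
  exact ⟨C, norm_cesaro_le fun n => (hC n).norm_twist_le _⟩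

theorem twistAverage_map (P : boundedSeq ι) (S : G) (N : ℕ) (x : A) :
    twistAverage P S N (ι x) = ι (cesaro N fun n => P.1 n * S ^ n • x) := by
  simp only [twistAverage_apply, twist_map, map_cesaro]

theorem orbitPairing_correlation (P : boundedSeq ι) (S : G) (l : ℕ) (b c : A) (N : ℕ) :
    orbitPairing ι S b c N (correlation P S l).1 = cesaro N fun m =>
      ⟪ι b, twist ι (P.1 (m + l)) (S ^ (m + l)) (ι ((S ^ l)⁻¹ • (P.1 l * c)))⟫_ℝ := by
  rw [orbitPairing_apply]
  congr 2 with m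
  rw [twist_map, pow_add, mul_smul, smul_inv_smul, smul_mul', ← mul_assoc, mul_comm b,
    IsL2System.inner_mul_left G]
  rfl

theorem IsWeakLimit.tendsto_orbitPairing_correlation {P : boundedSeq ι} {S : G}
    {U : Ultrafilter ℕ} (hU : ↑U ≤ (atTop : Filter ℕ)) {v : A} {z : H}
    (hz : IsWeakLimit (twistAverage P S) U (ι v) z) (l : ℕ) (c : A) :
    Tendsto (fun N => orbitPairing ι S (cesaro N fun n => P.1 n * S ^ n • v) c N
      (correlation P S l).1) U (nhds ⟪twist ι (P.1 l) (S ^ l) z, ι c⟫_ℝ) := by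
  obtain ⟨C, hC⟩ := P.2
  simp only [orbitPairing_correlation, ← twistAverage_map]
  set b := ι ((S ^ l)⁻¹ • (P.1 l * c))
  refine tendsto_cesaro_add hU
    (x := fun N n => ⟪twistAverage P S N (ι v), twist ι (P.1 n) (S ^ n) b⟫_ℝ)
    (C := C * ‖ι v‖ * (C * ‖b‖)) (fun N n => ?_) ?_ l
  · refine (norm_inner_le_norm _ _).trans (mul_le_mul ?_ ?_ (norm_nonneg _) (by positivity))
    · exact (twistAverage P S N).le_of_opNorm_le
        (norm_cesaro_le (fun n => (hC n).norm_twist_le _) N) _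
    · exact (twist ι _ _).le_of_opNorm_le ((hC n).norm_twist_le _) _
  · rw [inner_twist_map]
    refine (hz b).congr fun N => ?_
    rw [twistAverage_apply _ _ _ b]
    exact map_cesaro (innerₗ H (twistAverage P S N (ι v))) N _

theorem IsWeakLimit.tendsto_orbitPairing_cesaro {P : boundedSeq ι} {S : G}
    {U : Ultrafilter ℕ} (hU : ↑U ≤ (atTop : Filter ℕ)) {v : A} {z : H}
    (hz : IsWeakLimit (twistAverage P S) U (ι v) z) (L : ℕ) (c : A) :
    Tendsto (fun N => orbitPairing ι S (cesaro N fun n => P.1 n * S ^ n • v) c N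
      (cesaro L (correlation P S)).1) U (nhds ⟪twistAverage P S L z, ι c⟫_ℝ) := by
  have lhs (φ : (ℕ → A) →ₗ[ℝ] ℝ) :
      φ (cesaro L (correlation P S)).1 = cesaro L fun l => φ (correlation P S l).1 :=
    map_cesaro (φ ∘ₗ (boundedSeq ι).toSubmodule.subtype) L _
  have rhs : ⟪twistAverage P S L z, ι c⟫_ℝ =
      cesaro L fun l => ⟪twist ι (P.1 l) (S ^ l) z, ι c⟫_ℝ := by
    rw [twistAverage_apply]
    exact map_cesaro ((innerₗ H).flip (ι c)) L _
  simp only [lhs, rhs]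
  exact tendsto_cesaro (fun l => hz.tendsto_orbitPairing_correlation hU l c) L

theorem IsWeakLimit.exists_dist_twistAverage_le {P : boundedSeq ι} {S : G}
    {U : Ultrafilter ℕ} (hU : ↑U ≤ (atTop : Filter ℕ)) {v : A} {z : H}
    (hz : IsWeakLimit (twistAverage P S) U (ι v) z) {K : Type*} [NormedAddCommGroup K]
    [InnerProductSpace ℝ K] {j : boundedSeq ι →ₗ[ℝ] K}
    (hj : ∀ F F' : boundedSeq ι,
      Tendsto (fun N => cesaro N fun m => ⟪ι (F.1 m), ι (F'.1 m)⟫_ℝ) U (nhds ⟪j F, j F'⟫_ℝ)) :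
    ∃ D : ℝ, ∀ L L', dist (twistAverage P S L z) (twistAverage P S L' z) ≤
      D * dist (j (cesaro L (correlation P S))) (j (cesaro L' (correlation P S))) := by
  obtain ⟨C, hC⟩ := P.2
  obtain ⟨D, hD⟩ := IsL2System.exists_mulBound G (ι := ι) v
  refine ⟨C * D, fun L L' => ?_⟩
  set R := cesaro L (correlation P S) - cesaro L' (correlation P S)
  rw [dist_eq_norm, dist_eq_norm, ← map_sub j]
  refine norm_le_of_forall_abs_inner_le (IsL2System.denseRange G (ι := ι)) (by positivity) ?_
  rintro _ ⟨c, rfl⟩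
  have pairing_tendsto : Tendsto (fun N => orbitPairing ι S (cesaro N fun n => P.1 n * S ^ n • v)
      c N R.1) U (nhds ⟪twistAverage P S L z - twistAverage P S L' z, ι c⟫_ℝ) := by
    rw [inner_sub_left]
    refine ((hz.tendsto_orbitPairing_cesaro hU L c).sub
      (hz.tendsto_orbitPairing_cesaro hU L' c)).congr fun N => (map_sub _ _ _).symm
  have sq_le := le_of_tendsto_of_tendsto' (pairing_tendsto.pow 2)
    ((hj R R).const_mul ((↑(C * D) * ‖ι c‖) ^ 2)) fun N =>
      orbitPairing_sq_le S (mulBound_cesaro (fun n => (hC n).mul (hD.group_smul (S ^ n))) N) c N R.1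
  rw [real_inner_self_eq_norm_sq, ← mul_pow] at sq_le
  refine (abs_le_of_sq_le_sq sq_le (by positivity)).trans_eq ?_
  push_cast
  ring

theorem cauchySeq_cesaro_of_correlation (P : boundedSeq ι) (S : G)
    (h : ∀ (K : Type u) [NormedAddCommGroup K] [InnerProductSpace ℝ K] [CompleteSpace K]
      (j : boundedSeq ι →ₗ[ℝ] K) [IsL2System G j],
      CauchySeq fun L => j (cesaro L (correlation P S))) (v : A) :
    CauchySeq fun N => ι (cesaro N fun n => P.1 n * S ^ n • v) := by
  obtain ⟨C, hC⟩ := exists_norm_twistAverage_le P S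
  simp only [← twistAverage_map]
  refine cauchySeq_apply_of_isWeakLimit hC (IsL2System.denseRange G (ι := ι)) ?_ _
  rintro _ ⟨v, rfl⟩ U hU z hz
  obtain ⟨K, _, _, _, j, _, hj⟩ := exists_limit_isL2System (G := G) ι U
  obtain ⟨D, hD⟩ := hz.exists_dist_twistAverage_le hU hj
  exact cauchySeq_of_dist_le_mul_dist hD (h K j)

end Twist

section Induction

variable {G : Type v} [Group G] {A H : Type u} [CommRing A] [Algebra ℝ A] [MulSemiringAction G A]
  [NormedAddCommGroup H] [InnerProductSpace ℝ H] {ι : A →ₗ[ℝ] H} [IsL2System G ι]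

/-- The orbit `n ↦ g ^ n • a`, as a bounded sequence. -/
def orbitSeq (ι : A →ₗ[ℝ] H) [IsL2System G ι] (g : G) (a : A) : boundedSeq ι :=
  ⟨fun n => g ^ n • a, (IsL2System.exists_mulBound G a).imp fun _ h n => h.group_smul (g ^ n)⟩

theorem prod_orbitSeq_apply {I : Type*} (s : Finset I) (T : I → G) (f : I → A) (n : ℕ) :
    (∏ i ∈ s, orbitSeq ι (T i) (f i)).1 n = ∏ i ∈ s, T i ^ n • f i := by
  rw [← Subalgebra.val_apply, map_prod, Finset.prod_apply]
  rfl

theorem correlation_prod_orbitSeq {I : Type*} (s : Finset I) {T : I → G} {S : G}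
    (hS : ∀ i ∈ s, Commute S (T i)) (f : I → A) (l : ℕ) :
    correlation (∏ i ∈ s, orbitSeq ι (T i) (f i)) S l =
      ∏ i ∈ s, T i ^ l • (orbitSeq ι (T i) (f i) * orbitSeq ι S (f i)) := by
  refine Subtype.ext (funext fun m => ?_)
  rw [← Subalgebra.val_apply _ (∏ i ∈ s, _ : boundedSeq ι), map_prod, Finset.prod_apply]
  change _ * S ^ m • _ = ∏ i ∈ s, T i ^ l • (T i ^ m • f i * S ^ m • f i)
  rw [prod_orbitSeq_apply, prod_orbitSeq_apply, smul_prod', ← prod_mul_distrib]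
  refine prod_congr rfl fun i hi => ?_
  rw [smul_mul', smul_smul, smul_smul, smul_smul, ← pow_add, add_comm, ((hS i hi).pow_pow m l).eq]

theorem cauchySeq_cesaro_prod [SMulCommClass G ℝ A] [CompleteSpace H] (ι : A →ₗ[ℝ] H)
    [IsL2System G ι] {I : Type*} (s : Finset I) {T : I → G} (hT : ∀ i j, Commute (T i) (T j))
    (f : I → A) : CauchySeq fun N => ι (cesaro N fun n => ∏ i ∈ s, T i ^ n • f i) := by
  induction s using Finset.cons_induction generalizing A H with
  | empty =>
    refine (tendsto_const_nhds (x := ι 1)).congr' ?_ |>.cauchySeq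
    filter_upwards [eventually_ne_atTop 0] with N hN
    simp only [prod_empty, cesaro_const hN]
  | cons i s hi ih =>
    simp only [prod_cons, mul_comm (T i ^ _ • f i), ← prod_orbitSeq_apply (ι := ι) s T f]
    refine cauchySeq_cesaro_of_correlation _ (T i) (fun K _ _ _ j _ => ?_) (f i)
    simp only [funext (correlation_prod_orbitSeq s (fun j _ => hT i j) f)]
    exact ih j _

end Induction

section BoundedMeasurable

/-- The bounded measurable real functions, an everywhere-defined model of `L^∞`. -/
def boundedMeasurable (X : Type*) [MeasurableSpace X] : Subalgebra ℝ (X → ℝ) where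
  carrier := {f | Measurable f ∧ ∃ C, ∀ x, ‖f x‖ ≤ C}
  mul_mem' := fun ⟨hf, C, hC⟩ ⟨hg, D, hD⟩ =>
    ⟨hf.mul hg, C * D, fun x => norm_mul_le_of_le (hC x) (hD x)⟩
  add_mem' := fun ⟨hf, C, hC⟩ ⟨hg, D, hD⟩ =>
    ⟨hf.add hg, C + D, fun x => norm_add_le_of_le (hC x) (hD x)⟩
  algebraMap_mem' r := ⟨measurable_const, ‖r‖, fun _ => le_rfl⟩

variable {X : Type*} [MeasurableSpace X]

section Action

variable {G : Type*} [Group G] [MulAction G X] [MeasurableConstSMul G X]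

instance : MulSemiringAction Gᵈᵐᵃ (boundedMeasurable X) where
  smul g f := ⟨g • f.1, f.2.1.comp (measurable_const_smul (DomMulAct.mk.symm g)),
    f.2.2.imp fun _ hC _ => hC _⟩
  one_smul f := Subtype.ext (one_smul Gᵈᵐᵃ f.1)
  mul_smul g h f := Subtype.ext (mul_smul g h f.1)
  smul_zero g := Subtype.ext (smul_zero (A := X → ℝ) g)
  smul_add g f f' := Subtype.ext (smul_add g f.1 f'.1)
  smul_one g := Subtype.ext (smul_one (N := X → ℝ) g)
  smul_mul g f f' := Subtype.ext (smul_mul' g f.1 f'.1)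

instance : SMulCommClass Gᵈᵐᵃ ℝ (boundedMeasurable X) where
  smul_comm g r f := Subtype.ext (smul_comm g r f.1)

theorem mk_pow_smul_apply (g : G) (n : ℕ) (f : boundedMeasurable X) (x : X) :
    (DomMulAct.mk g ^ n • f).1 x = f.1 (g ^ n • x) := rfl

end Action

variable {μ : Measure X} [IsFiniteMeasure μ]

theorem memLp_boundedMeasurable (f : boundedMeasurable X) (p : ENNReal) : MemLp f.1 p μ := by
  obtain ⟨hf, C, hC⟩ := f.2
  exact MemLp.of_bound hf.aestronglyMeasurable C (Eventually.of_forall hC)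

variable (μ) in
/-- The map `L^∞ → L²` sending a function to its almost everywhere class. -/
noncomputable def toL2 : boundedMeasurable X →ₗ[ℝ] Lp ℝ 2 μ where
  toFun f := (memLp_boundedMeasurable f 2).toLp f.1
  map_add' f g := (memLp_boundedMeasurable f 2).toLp_add (memLp_boundedMeasurable g 2)
  map_smul' c f := (memLp_boundedMeasurable f 2).toLp_const_smul c

theorem coeFn_toL2 (f : boundedMeasurable X) : toL2 μ f =ᵐ[μ] f.1 :=
  (memLp_boundedMeasurable f 2).coeFn_toLp

theorem inner_toL2 (f g : boundedMeasurable X) :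
    ⟪toL2 μ f, toL2 μ g⟫_ℝ = ∫ x, f.1 x * g.1 x ∂μ := by
  refine integral_congr_ae ?_
  filter_upwards [coeFn_toL2 f, coeFn_toL2 g] with x hf hg
  rw [hf, hg, Real.inner_apply]

theorem denseRange_toL2 : DenseRange (toL2 μ (X := X)) := by
  refine (Lp.simpleFunc.denseRange (E := ℝ) (p := 2) ENNReal.ofNat_ne_top).mono ?_
  rintro _ ⟨φ, rfl⟩
  let ψ := Lp.simpleFunc.toSimpleFunc φ
  exact ⟨⟨ψ, ψ.measurable, ψ.exists_forall_norm_le⟩,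
    Lp.ext ((coeFn_toL2 _).trans (Lp.simpleFunc.toSimpleFunc_eq_toFun φ))⟩

theorem mulBound_toL2 {f : boundedMeasurable X} {C : ℝ} (hf : ∀ x, ‖f.1 x‖ ≤ C) :
    MulBound (toL2 μ) C.toNNReal f := fun g => by
  refine Lp.norm_le_mul_norm_of_ae_le_mul ?_
  filter_upwards [coeFn_toL2 (f * g), coeFn_toL2 g] with x hfg hg
  rw [hfg, hg]
  exact (norm_mul_le _ _).trans (by
    gcongr
    exact (hf x).trans C.le_coe_toNNReal)

instance {G : Type*} [Group G] [MulAction G X] [MeasurableConstSMul G X]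
    [SMulInvariantMeasure G X μ] : IsL2System Gᵈᵐᵃ (toL2 μ) where
  denseRange := denseRange_toL2
  inner_mul_left f g h := by
    simp only [inner_toL2, Subalgebra.coe_mul, Pi.mul_apply]
    congr with x
    ring
  inner_smul_smul g f h := by
    rw [inner_toL2, inner_toL2]
    exact (measurePreserving_smul (DomMulAct.mk.symm g) μ).integral_comp
      (measurableEmbedding_const_smul _) fun x => f.1 x * h.1 x
  exists_mulBound f := let ⟨_, _, hC⟩ := f.2; ⟨_, mulBound_toL2 hC⟩

variable (μ) in
theorem exists_tendsto_cesaro_prod_smul {G : Type*} [Group G] [MulAction G X]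
    [MeasurableConstSMul G X] [SMulInvariantMeasure G X μ] {I : Type*} (s : Finset I)
    {T : I → G} (hT : ∀ i j, Commute (T i) (T j)) (f : I → boundedMeasurable X) :
    ∃ F : X → ℝ, Measurable F ∧ Tendsto (fun N : ℕ => eLpNorm
      (cesaro N (fun n x => ∏ i ∈ s, (f i).1 (T i ^ n • x)) - F) 2 μ) atTop (nhds 0) := by
  have cauchy := cauchySeq_cesaro_prod (toL2 μ) s (T := fun i => DomMulAct.mk (T i))
    (fun i j => congrArg DomMulAct.mk (hT j i)) f
  obtain ⟨F, hF⟩ := cauchySeq_tendsto_of_complete cauchy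
  refine ⟨F, (Lp.stronglyMeasurable F).measurable, ?_⟩
  refine ((Lp.tendsto_Lp_iff_tendsto_eLpNorm' _ _).mp hF).congr fun N => ?_
  refine eLpNorm_congr_ae (((coeFn_toL2 _).trans (.of_eq ?_)).sub .rfl)
  refine (map_cesaro (boundedMeasurable X).val.toLinearMap N _).trans (congrArg _ ?_)
  ext n x
  simp [mk_pow_smul_apply]

end BoundedMeasurable

section Perm

variable {X : Type*} [MeasurableSpace X] {μ : Measure X}

/-- The group of measurably invertible permutations preserving `μ`. -/
def measurePreservingPerm (μ : Measure X) : Subgroup (Equiv.Perm X) where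
  carrier := {g | MeasurePreserving g μ μ ∧ MeasurePreserving ⇑g⁻¹ μ μ}
  mul_mem' := fun ⟨hg, hg'⟩ ⟨hh, hh'⟩ => ⟨hg.comp hh, by
    rw [mul_inv_rev]
    exact hh'.comp hg'⟩
  one_mem' := ⟨.id μ, .id μ⟩
  inv_mem' := fun ⟨hg, hg'⟩ => ⟨hg', by rwa [inv_inv]⟩

instance : MeasurableConstSMul (measurePreservingPerm μ) X where
  measurable_const_smul g := g.2.1.measurable

instance : SMulInvariantMeasure (measurePreservingPerm μ) X μ where
  measure_preimage_smul g _ hs := g.2.1.measure_preimage hs.nullMeasurableSet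

theorem pow_smul_eq_iterate (g : measurePreservingPerm μ) (n : ℕ) (x : X) :
    g ^ n • x = g.1^[n] x :=
  congrFun (Equiv.Perm.iterate_eq_pow g.1 n).symm x

end Perm

theorem multiple_ergodic_averages_converge_general {X : Type*} [MeasurableSpace X]
    (μ : Measure X) [IsFiniteMeasure μ] {I : Type*} [Fintype I] (T Tinv : I → X → X)
    (hTinvMeas : ∀ i, Measurable (Tinv i))
    (hinv : ∀ i, Function.LeftInverse (Tinv i) (T i) ∧ Function.RightInverse (Tinv i) (T i))
    (hcomm : ∀ i j, T i ∘ T j = T j ∘ T i) (hT : ∀ i, MeasurePreserving (T i) μ μ)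
    (f : I → X → ℝ) (hf : ∀ i, Measurable (f i)) (hbd : ∀ i, ∃ C, ∀ x, |f i x| ≤ C) :
    ∃ F : X → ℝ, Measurable F ∧
      Tendsto (fun N : ℕ => eLpNorm
        (fun x => ((N : ℝ)⁻¹ * ∑ n ∈ range N, ∏ i, f i ((T i)^[n] x)) - F x) 2 μ)
        atTop (nhds 0) := by
  let e (i : I) : X ≃ᵐ X :=
    { toFun := T i
      invFun := Tinv i
      left_inv := (hinv i).1
      right_inv := (hinv i).2
      measurable_toFun := (hT i).measurable
      measurable_invFun := hTinvMeas i }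
  let g (i : I) : measurePreservingPerm μ := ⟨(e i).toEquiv, hT i, (hT i).symm (e i)⟩
  obtain ⟨F, hF, hlim⟩ := exists_tendsto_cesaro_prod_smul μ univ (T := g)
    (fun i j => Subtype.ext (Equiv.ext (congrFun (hcomm i j))))
    (fun i => ⟨f i, hf i, hbd i⟩)
  refine ⟨F, hF, hlim.congr fun N => ?_⟩
  congr 1 with x
  simp only [cesaro_apply, Pi.sub_apply, Pi.smul_apply, Finset.sum_apply, smul_eq_mul,
    pow_smul_eq_iterate]
  rfl

/-- **Convergence of multiple ergodic averages for commuting transformations.**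
If `T 1, …, T l` are commuting invertible ergodic measure preserving transformations of a
probability space with `T i ∘ (T j)⁻¹` ergodic for `i ≠ j`, then for bounded measurable
`f 1, …, f l` the averages `(1/N) ∑_{n<N} ∏ᵢ fᵢ(Tᵢⁿ x)` converge in `L²(μ)`. -/
theorem multiple_ergodic_averages_converge {X : Type*} [MeasurableSpace X]
    (μ : Measure X) [IsProbabilityMeasure μ] (l : ℕ) (hl : 1 ≤ l)
    (T Tinv : Fin l → X → X)
    (hTinvMeas : ∀ i, Measurable (Tinv i))
    (hinv : ∀ i, Function.LeftInverse (Tinv i) (T i) ∧ Function.RightInverse (Tinv i) (T i))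
    (hcomm : ∀ i j, T i ∘ T j = T j ∘ T i)
    (herg : ∀ i, Ergodic (T i) μ)
    (hergdiff : ∀ i j, i ≠ j → Ergodic (T i ∘ Tinv j) μ)
    (f : Fin l → X → ℝ) (hf : ∀ i, Measurable (f i)) (hbd : ∀ i, ∃ C, ∀ x, |f i x| ≤ C) :
    ∃ F : X → ℝ, Measurable F ∧
      Filter.Tendsto
        (fun N : ℕ => eLpNorm
          (fun x => ((N : ℝ)⁻¹ * ∑ n ∈ Finset.range N, ∏ i, f i ((T i)^[n] x)) - F x) 2 μ)
        Filter.atTop (nhds 0) := by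
  exact multiple_ergodic_averages_converge_general μ T Tinv hTinvMeas hinv hcomm
    (fun i => (herg i).toMeasurePreserving) f hf hbd
end

section
/- Let $T$ and $S$ be commuting invertible ergodic measure preserving transformations of a probability space $(X,\mathcal{X},\mu)$. Then for every $k\geq 1$ and every $f\in L^\infty(\mu)$, the Host–Kra seminorms agree: $\nnorm{f}_{k,T} = \nnorm{f}_{k,S}$. -/
open MeasureTheory Filter Finset

/-!
Let `ν` be the relatively independent square of `μ` over the `T`-invariant sets, where `R` commutes
with `T` and fixes these sets modulo `μ`. A set `B` invariant under `T × T` is almost invariant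
under `R × R`, because `R` is locally approximated by powers of `T`. Indeed, let `A` be a set of
positive measure over which the fibers of `B` and of its reflection are nearly constant. By
recurrence some `n` has `R x ∈ A` and `T^n x ∈ A` for a set of `x` of positive measure, and then
the fibers over `R x` and `T^n x` nearly agree. This condition on `x` is `T`-invariant, hence it
holds over an invariant set. For `x` and `y` there, the chain `(R x, R y)`, `(T^n x, R y)`,
`(T^n x, T^n y)` rarely crosses the boundary of `B`, and `B` does not distinguish its last term
from `(x, y)`. Exhausting `X` by such invariant sets with errors tending to `0` shows that
`R × R` fixes `B` modulo `ν`. So if `T` and `R` have the same invariant sets modulo `μ`, their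
relatively independent squares coincide and `T × T` and `R × R` again have the same invariant sets;
induction on `k` identifies all the box measures.
-/

open scoped ENNReal NNReal symmDiff ProbabilityTheory

section InvariantSets

variable {α : Type*} {m : MeasurableSpace α} [MeasurableSpace α] {μ : Measure α} {T R : α → α}

/-- The σ-algebra of measurable sets that are invariant under `T` up to a `μ`-null set. That `R`
fixes every `T`-invariant set modulo `μ` is expressed by `aeInvSigma μ T ≤ aeInvSigma μ R`. -/
@[reducible] def aeInvSigma (μ : Measure α) (T : α → α) : MeasurableSpace α where
  MeasurableSet' s := MeasurableSet s ∧ T ⁻¹' s =ᵐ[μ] s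
  measurableSet_empty := ⟨MeasurableSet.empty, EventuallyEq.rfl⟩
  measurableSet_compl _ hs := ⟨hs.1.compl, hs.2.compl⟩
  measurableSet_iUnion s hs := ⟨MeasurableSet.iUnion fun i => (hs i).1, by
    rw [Set.preimage_iUnion]; exact Filter.EventuallyEq.countable_iUnion fun i => (hs i).2⟩

lemma aeInvSigma_le : aeInvSigma μ T ≤ ‹MeasurableSpace α› := fun _ h => h.1

lemma invSigma_le : invSigma T ≤ ‹MeasurableSpace α› := fun _ h => h.1

lemma invSigma_le_aeInvSigma : invSigma T ≤ aeInvSigma μ T :=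
  fun _ h => ⟨h.1, EventuallyEq.of_eq h.2⟩

lemma aeInvSigma_le_aeInvSigma_iterate (hT : Measure.QuasiMeasurePreserving T μ μ) (n : ℕ) :
    aeInvSigma μ T ≤ aeInvSigma μ T^[n] :=
  fun _ hs => ⟨hs.1, hT.preimage_iterate_ae_eq n hs.2⟩

lemma aeInvSigma_le_of_quasiErgodic (hT : QuasiErgodic T μ)
    (hR : Measure.QuasiMeasurePreserving R μ μ) : aeInvSigma μ T ≤ aeInvSigma μ R := by
  rintro s ⟨hs, hTs⟩
  refine ⟨hs, ?_⟩
  rcases hT.ae_empty_or_univ₀ hs.nullMeasurableSet hTs with h | h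
  all_goals exact (hR.preimage_ae_eq h).trans h.symm

lemma aeInvSigma_eq_of_quasiErgodic (hT : QuasiErgodic T μ) (hR : QuasiErgodic R μ) :
    aeInvSigma μ T = aeInvSigma μ R :=
  (aeInvSigma_le_of_quasiErgodic hT hR.toQuasiMeasurePreserving).antisymm
    (aeInvSigma_le_of_quasiErgodic hR hT.toQuasiMeasurePreserving)

lemma aeInvSigma_le_of_forall_preimage_eq (hT : Measure.QuasiMeasurePreserving T μ μ)
    (hR : Measure.QuasiMeasurePreserving R μ μ)
    (h : ∀ s, MeasurableSet s → T ⁻¹' s = s → R ⁻¹' s =ᵐ[μ] s) :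
    aeInvSigma μ T ≤ aeInvSigma μ R := by
  rintro s ⟨hs, hTs⟩
  obtain ⟨t, ht, hts, hTt⟩ := hT.exists_preimage_eq_of_preimage_ae hs.nullMeasurableSet hTs
  exact ⟨hs, (hR.preimage_ae_eq hts.symm).trans ((h t ht hTt).trans hts)⟩

lemma measurableSet_aeInvSigma_iUnion_preimage_iterate [IsFiniteMeasure μ]
    (hT : MeasurePreserving T μ μ) {A : Set α} (hA : MeasurableSet A) :
    MeasurableSet[aeInvSigma μ T] (⋃ n, T^[n] ⁻¹' A) := by
  have hmeas : MeasurableSet (⋃ n, T^[n] ⁻¹' A) :=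
    MeasurableSet.iUnion fun n => hT.measurable.iterate n hA
  have hsub : T ⁻¹' (⋃ n, T^[n] ⁻¹' A) ⊆ ⋃ n, T^[n] ⁻¹' A := by
    rw [Set.preimage_iUnion]
    exact Set.iUnion_subset fun n => Set.subset_iUnion (fun n => T^[n] ⁻¹' A) (n + 1)
  exact ⟨hmeas, ae_eq_of_subset_of_measure_ge hsub
    (hT.measure_preimage hmeas.nullMeasurableSet).ge (hT.measurable hmeas).nullMeasurableSet
    (measure_ne_top _ _)⟩

lemma exists_measure_preimage_inter_preimage_iterate_ne_zero [IsFiniteMeasure μ]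
    (hT : MeasurePreserving T μ μ) (hR : MeasurePreserving R μ μ)
    (hTR : aeInvSigma μ T ≤ aeInvSigma μ R) {A : Set α} (hA : MeasurableSet A) (hA0 : μ A ≠ 0) :
    ∃ n, μ (R ⁻¹' A ∩ T^[n] ⁻¹' A) ≠ 0 := by
  by_contra! hnull
  set O := ⋃ n, T^[n] ⁻¹' A
  have hRO : R ⁻¹' O =ᵐ[μ] O :=
    (hTR _ (measurableSet_aeInvSigma_iUnion_preimage_iterate hT hA)).2
  have hAO : R ⁻¹' A ⊆ R ⁻¹' O := Set.preimage_mono (Set.subset_iUnion (fun n => T^[n] ⁻¹' A) 0)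
  refine hA0 ?_
  calc μ A = μ (R ⁻¹' A ∩ R ⁻¹' O) := by
        rw [Set.inter_eq_left.2 hAO, hR.measure_preimage hA.nullMeasurableSet]
    _ = μ (R ⁻¹' A ∩ O) := measure_congr (EventuallyEq.rfl.inter hRO)
    _ = 0 := by rw [Set.inter_iUnion]; exact measure_iUnion_null hnull

lemma measurableEmbedding_iterate (hT : MeasurableEmbedding T) (n : ℕ) :
    MeasurableEmbedding T^[n] := by
  induction n with
  | zero => exact MeasurableEmbedding.id
  | succ n ih => exact ih.comp hT

variable {E : Type*} [NormedAddCommGroup E] [NormedSpace ℝ E] [CompleteSpace E] {F : α → E}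

lemma condExp_invSigma_ae_eq [IsFiniteMeasure μ] (hT : Measure.QuasiMeasurePreserving T μ μ)
    (hF : Integrable F μ) : μ[F | invSigma T] =ᵐ[μ] μ[F | aeInvSigma μ T] := by
  refine ae_eq_condExp_of_forall_setIntegral_eq aeInvSigma_le hF
    (fun _ _ _ => integrable_condExp.integrableOn) ?_
    (stronglyMeasurable_condExp.mono invSigma_le_aeInvSigma).aestronglyMeasurable
  rintro s ⟨hs, hTs⟩ -
  obtain ⟨t, ht, hts, hTt⟩ := hT.exists_preimage_eq_of_preimage_ae hs.nullMeasurableSet hTs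
  rw [← setIntegral_congr_set hts, ← setIntegral_congr_set hts]
  exact setIntegral_condExp invSigma_le hF ⟨ht, hTt⟩

lemma condExp_comp_ae_eq [IsFiniteMeasure μ] (hR : MeasurePreserving R μ μ)
    (hm : m ≤ aeInvSigma μ R) (hF : Integrable F μ) : μ[F ∘ R | m] =ᵐ[μ] μ[F | m] := by
  refine (ae_eq_condExp_of_forall_setIntegral_eq (hm.trans aeInvSigma_le)
    (hR.integrable_comp_of_integrable hF) (fun _ _ _ => integrable_condExp.integrableOn) ?_
    stronglyMeasurable_condExp.aestronglyMeasurable).symm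
  intro s hs _
  obtain ⟨hs', hRs⟩ := hm s hs
  calc ∫ x in s, (μ[F | m]) x ∂μ = ∫ x in s, F x ∂(μ.map R) := by
        rw [setIntegral_condExp (hm.trans aeInvSigma_le) hF hs, hR.map_eq]
    _ = ∫ x in R ⁻¹' s, F (R x) ∂μ :=
        setIntegral_map hs' (hR.map_eq.symm ▸ hF.aestronglyMeasurable) hR.aemeasurable
    _ = ∫ x in s, (F ∘ R) x ∂μ := setIntegral_congr_set hRs

end InvariantSets

section RelIndepSquare

variable {α : Type*} {m : MeasurableSpace α} [MeasurableSpace α] {μ : Measure α}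

/-- `ν` is the relatively independent square `μ ×_m μ` of `μ` over the σ-algebra `m`. It is enough
to prescribe `ν` on measurable rectangles. -/
def IsRelIndepSquare {α : Type*} (m : MeasurableSpace α) [MeasurableSpace α] (μ : Measure α)
    (ν : Measure (α × α)) : Prop :=
  ∀ ⦃A B : Set α⦄, MeasurableSet A → MeasurableSet B →
    ν.real (A ×ˢ B) = ∫ x, (μ⟦A | m⟧) x * (μ⟦B | m⟧) x ∂μ

lemma integrable_indicator_one [IsFiniteMeasure μ] {A : Set α} (hA : MeasurableSet A) :
    Integrable (A.indicator fun _ => (1 : ℝ)) μ :=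
  (integrable_const 1).indicator hA

lemma measure_eq_of_real_prod_eq {β : Type*} [MeasurableSpace β] {ν ν' : Measure (α × β)}
    [IsFiniteMeasure ν] [IsFiniteMeasure ν']
    (h : ∀ A B, MeasurableSet A → MeasurableSet B → ν.real (A ×ˢ B) = ν'.real (A ×ˢ B)) :
    ν = ν' :=
  Measure.ext_prod fun hA hB => (measureReal_eq_measureReal_iff).1 (h _ _ hA hB)

lemma isRelIndepSquare_of_forall_integral_mul_eq {ν : Measure (α × α)}
    (h : ∀ F F' : α → ℝ, Measurable F → Measurable F' → (∃ C, ∀ x, |F x| ≤ C) →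
      (∃ C, ∀ x, |F' x| ≤ C) → ∫ p, F p.1 * F' p.2 ∂ν = ∫ x, (μ[F | m]) x * (μ[F' | m]) x ∂μ) :
    IsRelIndepSquare m μ ν := by
  intro A B hA hB
  have hbound (s : Set α) : ∃ C, ∀ x, |s.indicator (fun _ => (1 : ℝ)) x| ≤ C :=
    ⟨1, fun x => by by_cases hx : x ∈ s <;> simp [hx]⟩
  calc ν.real (A ×ˢ B)
      = ∫ p, A.indicator (fun _ => (1 : ℝ)) p.1 * B.indicator (fun _ => 1) p.2 ∂ν := by
        rw [← integral_indicator_one (hA.prod hB)]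
        congr with p
        exact Set.indicator_prod_one
    _ = ∫ x, (μ⟦A | m⟧) x * (μ⟦B | m⟧) x ∂μ :=
        h _ _ (measurable_const.indicator hA) (measurable_const.indicator hB) (hbound A) (hbound B)

lemma IsRelIndepSquare.of_invSigma [IsFiniteMeasure μ] {ν : Measure (α × α)} {T : α → α}
    (hν : IsRelIndepSquare (invSigma T) μ ν) (hT : Measure.QuasiMeasurePreserving T μ μ) :
    IsRelIndepSquare (aeInvSigma μ T) μ ν := fun _ _ hA hB =>
  (hν hA hB).trans (integral_congr_ae
    ((condExp_invSigma_ae_eq hT (integrable_indicator_one hA)).mul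
      (condExp_invSigma_ae_eq hT (integrable_indicator_one hB))))

namespace IsRelIndepSquare

variable [IsProbabilityMeasure μ] {ν ν' : Measure (α × α)} {R P : α → α}

lemma real_prod_univ (hν : IsRelIndepSquare m μ ν) (hm : m ≤ ‹MeasurableSpace α›) {A : Set α}
    (hA : MeasurableSet A) : ν.real (A ×ˢ Set.univ) = μ.real A := by
  rw [hν hA MeasurableSet.univ, Set.indicator_univ, condExp_const hm]
  simp only [mul_one]
  rw [integral_condExp hm]
  exact integral_indicator_one hA

lemma isProbabilityMeasure (hν : IsRelIndepSquare m μ ν) (hm : m ≤ ‹MeasurableSpace α›) :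
    IsProbabilityMeasure ν := by
  have h : ν.real Set.univ = 1 := by
    rw [← Set.univ_prod_univ, hν.real_prod_univ hm .univ, probReal_univ]
  exact ⟨(ENNReal.toReal_eq_one_iff _).1 h⟩

lemma unique (hν : IsRelIndepSquare m μ ν) (hν' : IsRelIndepSquare m μ ν')
    (hm : m ≤ ‹MeasurableSpace α›) : ν = ν' := by
  have := hν.isProbabilityMeasure hm
  have := hν'.isProbabilityMeasure hm
  exact measure_eq_of_real_prod_eq fun A B hA hB => (hν hA hB).trans (hν' hA hB).symm

lemma fst_eq (hν : IsRelIndepSquare m μ ν) (hm : m ≤ ‹MeasurableSpace α›) : ν.fst = μ := by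
  have := hν.isProbabilityMeasure hm
  ext s hs
  rw [Measure.fst_apply hs, ← Set.prod_univ]
  exact (measureReal_eq_measureReal_iff).1 (hν.real_prod_univ hm hs)

lemma measurePreserving_swap (hν : IsRelIndepSquare m μ ν) (hm : m ≤ ‹MeasurableSpace α›) :
    MeasurePreserving Prod.swap ν ν := by
  have := hν.isProbabilityMeasure hm
  refine ⟨measurable_swap, measure_eq_of_real_prod_eq fun A B hA hB => ?_⟩
  rw [map_measureReal_apply measurable_swap (hA.prod hB), Set.preimage_swap_prod,
    hν hA hB, hν hB hA]
  simp only [mul_comm]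

lemma measurePreserving_prodMap_id (hν : IsRelIndepSquare m μ ν) (hR : MeasurePreserving R μ μ)
    (hmR : m ≤ aeInvSigma μ R) : MeasurePreserving (Prod.map R id) ν ν := by
  have := hν.isProbabilityMeasure (hmR.trans aeInvSigma_le)
  have hmeas : Measurable (Prod.map R id : α × α → α × α) := hR.measurable.prodMap measurable_id
  refine ⟨hmeas, measure_eq_of_real_prod_eq fun A B hA hB => ?_⟩
  have hpre : Prod.map R id ⁻¹' (A ×ˢ B) = (R ⁻¹' A) ×ˢ B := rfl
  rw [map_measureReal_apply hmeas (hA.prod hB), hpre, hν (hR.measurable hA) hB, hν hA hB]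
  refine integral_congr_ae ?_
  filter_upwards [condExp_comp_ae_eq hR hmR (integrable_indicator_one hA)] with x hx
  rw [← hx]
  rfl

lemma measurePreserving_id_prodMap (hν : IsRelIndepSquare m μ ν) (hR : MeasurePreserving R μ μ)
    (hmR : m ≤ aeInvSigma μ R) : MeasurePreserving (Prod.map id R) ν ν :=
  have hswap := hν.measurePreserving_swap (hmR.trans aeInvSigma_le)
  hswap.comp ((hν.measurePreserving_prodMap_id hR hmR).comp hswap)

lemma measurePreserving_prodMap (hν : IsRelIndepSquare m μ ν) (hR : MeasurePreserving R μ μ)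
    (hmR : m ≤ aeInvSigma μ R) : MeasurePreserving (Prod.map R R) ν ν :=
  (hν.measurePreserving_prodMap_id hR hmR).comp (hν.measurePreserving_id_prodMap hR hmR)

lemma measure_prod_compl_eq_zero (hν : IsRelIndepSquare m μ ν) (hm : m ≤ ‹MeasurableSpace α›)
    {J : Set α} (hJ : MeasurableSet[m] J) : ν (J ×ˢ Jᶜ) = 0 := by
  have := hν.isProbabilityMeasure hm
  have hcond {s : Set α} (hs : MeasurableSet[m] s) :
      μ⟦s | m⟧ = s.indicator fun _ => (1 : ℝ) :=
    condExp_of_stronglyMeasurable hm (stronglyMeasurable_const.indicator hs)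
      (integrable_indicator_one (hm s hs))
  rw [← measureReal_eq_zero_iff, hν (hm J hJ) (hm J hJ).compl, hcond hJ, hcond hJ.compl]
  simp [← Set.inter_indicator_mul]

lemma preimage_fst_ae_eq_preimage_snd (hν : IsRelIndepSquare m μ ν)
    (hm : m ≤ ‹MeasurableSpace α›) {J : Set α} (hJ : MeasurableSet[m] J) :
    (Prod.fst ⁻¹' J : Set (α × α)) =ᵐ[ν] Prod.snd ⁻¹' J := by
  have hnull := hν.measure_prod_compl_eq_zero hm hJ
  have hnull' := hν.measure_prod_compl_eq_zero hm hJ.compl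
  rw [compl_compl, Set.prod_eq, Set.inter_comm] at hnull'
  exact (ae_le_set.2 hnull).antisymm (ae_le_set.2 hnull')

end IsRelIndepSquare

end RelIndepSquare

section MeasureComparison

variable {α : Type*} {m mα : MeasurableSpace α} {μ ρ : Measure α} [IsFiniteMeasure μ]
  [IsFiniteMeasure ρ]

lemma exists_subset_forall_measure_le {J : Set α} (hJ : MeasurableSet J) (hlt : ρ J < μ J) :
    ∃ A ⊆ J, MeasurableSet A ∧ μ A ≠ 0 ∧ ∀ s ⊆ A, MeasurableSet s → ρ s ≤ μ s := by
  obtain ⟨S, hS, hle, hge⟩ := hahn_decomposition μ ρ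
  refine ⟨J ∩ S, Set.inter_subset_left, hJ.inter hS, fun h0 => hlt.not_ge ?_,
    fun s hs hsm => hle s hsm (hs.trans Set.inter_subset_right)⟩
  calc μ J = μ (J \ S) := by rw [← measure_inter_add_sdiff J hS, h0, zero_add]
    _ ≤ ρ (J \ S) := hge _ (hJ.diff hS) fun _ hx => hx.2
    _ ≤ ρ J := measure_mono Set.sdiff_subset

lemma measure_univ_le_of_forall_exists_subset (hm : m ≤ mα) (hac : ρ ≪ μ)
    (h : ∀ J, MeasurableSet[m] J → μ J ≠ 0 → ∃ J' ⊆ J, MeasurableSet[m] J' ∧ ρ J' < μ J') :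
    ρ Set.univ ≤ μ Set.univ := by
  by_contra! hlt
  rw [← trim_measurableSet_eq hm .univ, ← trim_measurableSet_eq hm .univ] at hlt
  obtain ⟨A, -, hA, hA0, hle⟩ := exists_subset_forall_measure_le .univ hlt
  rw [trim_measurableSet_eq hm hA] at hA0
  obtain ⟨J, hJA, hJ, hJlt⟩ := h A hA (mt (@hac A) hA0)
  have hJle := hle J hJA hJ
  rw [trim_measurableSet_eq hm hJ, trim_measurableSet_eq hm hJ] at hJle
  exact hJlt.not_ge hJle

end MeasureComparison

section FiberDiff

variable {α β : Type*} {R P T : α → α} {B : Set (α × β)}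

/-- The points `(x, y)` such that `B` contains exactly one of `(R x, y)` and `(P x, y)`. It is used
to measure how well `P` approximates `R` as far as the fibers of `B` are concerned. -/
def fiberDiff (R P : α → α) (B : Set (α × β)) : Set (α × β) :=
  (Prod.map R id ⁻¹' B) ∆ (Prod.map P id ⁻¹' B)

lemma preimage_prodMap_fiberDiff {Q : β → β} (hRT : Function.Commute R T)
    (hPT : Function.Commute P T) (hB : Prod.map T Q ⁻¹' B = B) :
    Prod.map T Q ⁻¹' fiberDiff R P B = fiberDiff R P B := by
  have hcomm {F : α → α} (hF : Function.Commute F T) :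
      Prod.map T Q ⁻¹' (Prod.map F id ⁻¹' B) = Prod.map F id ⁻¹' B := by
    conv_rhs => rw [← hB]
    ext ⟨x, y⟩
    simp only [Set.mem_preimage, Prod.map_apply, id, hF.eq]
  rw [fiberDiff, Set.preimage_symmDiff, hcomm hRT, hcomm hPT]

end FiberDiff

section Fibers

variable {α β : Type*} [MeasurableSpace α] [MeasurableSpace β] {ν : Measure (α × β)}
  {W W' : Set (α × β)} {A A' : Set α} {c c' : ℝ≥0}

/-- For almost every `x ∈ A`, the fiber of `W` over `x` has conditional measure at most `c`.
Integrating over subsets of `A` avoids disintegrating `ν`, which need not be possible. -/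
def FiberwiseLE (ν : Measure (α × β)) (W : Set (α × β)) (A : Set α) (c : ℝ≥0) : Prop :=
  ∀ s ⊆ A, MeasurableSet s → ν (Prod.fst ⁻¹' s ∩ W) ≤ c * ν.fst s

namespace FiberwiseLE

lemma mono (h : FiberwiseLE ν W A c) (hA : A' ⊆ A)
    (hW : Prod.fst ⁻¹' A' ∩ W' ⊆ W) : FiberwiseLE ν W' A' c := fun s hs hsm =>
  (measure_mono (Set.subset_inter Set.inter_subset_left
    ((Set.inter_subset_inter_left W' (Set.preimage_mono hs)).trans hW))).trans
    (h s (hs.trans hA) hsm)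

lemma union (h : FiberwiseLE ν W A c) (h' : FiberwiseLE ν W' A c') :
    FiberwiseLE ν (W ∪ W') A (c + c') := fun s hs hsm => by
  rw [Set.inter_union_distrib_left, ENNReal.coe_add, add_mul]
  exact (measure_union_le _ _).trans (add_le_add (h s hs hsm) (h' s hs hsm))

lemma preimage {P : α → α} {Q : β → β} (h : FiberwiseLE ν W A c) (hW : MeasurableSet W)
    (hP : MeasurableEmbedding P) (hPQ : MeasurePreserving (Prod.map P Q) ν ν) :
    FiberwiseLE ν (Prod.map P Q ⁻¹' W) (P ⁻¹' A) c := by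
  intro s hs hsm
  have hPs : MeasurableSet (P '' s) := hP.measurableSet_image.2 hsm
  have hpre : (Prod.fst ⁻¹' s : Set (α × β)) = Prod.map P Q ⁻¹' (Prod.fst ⁻¹' (P '' s)) := by
    conv_lhs => rw [← Set.preimage_image_eq s hP.injective]
    rfl
  rw [Measure.fst_apply hsm, hpre, ← Set.preimage_inter,
    hPQ.measure_preimage ((measurable_fst hPs).inter hW).nullMeasurableSet,
    hPQ.measure_preimage (measurable_fst hPs).nullMeasurableSet, ← Measure.fst_apply hPs]
  exact h _ (Set.image_subset_iff.2 hs) hPs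

lemma iUnion {A : ℕ → Set α} (hA : ∀ n, MeasurableSet (A n))
    (h : ∀ n, FiberwiseLE ν W (A n) c) : FiberwiseLE ν W (⋃ n, A n) c := by
  intro s hs hsm
  set t : ℕ → Set α := fun n => s ∩ disjointed A n
  have htm (n : ℕ) : MeasurableSet (t n) := hsm.inter (.disjointed hA n)
  have hst : s = ⋃ n, t n := by
    rw [← Set.inter_iUnion, iUnion_disjointed, Set.inter_eq_left.2 hs]
  have hdisj : Pairwise (Function.onFun Disjoint t) := fun i j hij =>
    (disjoint_disjointed A hij).mono Set.inter_subset_right Set.inter_subset_right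
  calc ν (Prod.fst ⁻¹' s ∩ W) ≤ ∑' n, ν (Prod.fst ⁻¹' t n ∩ W) := by
        rw [hst, Set.preimage_iUnion, Set.iUnion_inter]
        exact measure_iUnion_le _
    _ ≤ ∑' n, c * ν.fst (t n) := ENNReal.tsum_le_tsum fun n =>
        h n _ (Set.inter_subset_right.trans (disjointed_subset A n)) (htm n)
    _ = c * ν.fst s := by rw [ENNReal.tsum_mul_left, ← measure_iUnion hdisj htm, ← hst]

lemma iUnion_preimage_iterate {T : α → α} {Q : β → β} (h : FiberwiseLE ν W A c)
    (hW : MeasurableSet W) (hA : MeasurableSet A) (hT : MeasurableEmbedding T)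
    (hTQ : MeasurePreserving (Prod.map T Q) ν ν) (hTW : Prod.map T Q ⁻¹' W = W) :
    FiberwiseLE ν W (⋃ n, T^[n] ⁻¹' A) c := by
  refine iUnion (fun n => hT.measurable.iterate n hA) fun n => ?_
  induction n with
  | zero => exact h
  | succ n ih => exact hTW ▸ ih.preimage hW hT hTQ

end FiberwiseLE

lemma fst_restrict_apply {s : Set α} (hs : MeasurableSet s) :
    (ν.restrict W).fst s = ν (Prod.fst ⁻¹' s ∩ W) := by
  rw [Measure.fst_apply hs, Measure.restrict_apply (measurable_fst hs)]

lemma exists_subset_fiberwiseLE [IsFiniteMeasure ν] {J : Set α} (hJ : MeasurableSet J)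
    (hlt : ν W < c * ν.fst J) :
    ∃ A ⊆ J, MeasurableSet A ∧ ν.fst A ≠ 0 ∧ FiberwiseLE ν W A c := by
  have hltJ : (ν.restrict W).fst J < (c • ν.fst) J :=
    (fst_restrict_apply hJ).trans_lt ((measure_mono Set.inter_subset_right).trans_lt hlt)
  obtain ⟨A, hAJ, hA, hA0, hle⟩ := exists_subset_forall_measure_le hJ hltJ
  refine ⟨A, hAJ, hA, fun h0 => hA0 (by simp [h0]), fun s hs hsm => ?_⟩
  exact (fst_restrict_apply hsm).symm.trans_le (hle s hs hsm)

lemma exists_subset_section_eq (μ : Measure α) {E : Set (α × β)}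
    (hE : E ∈ generateSetAlgebra
      (Set.image2 (· ×ˢ ·) {s : Set α | MeasurableSet s} {t : Set β | MeasurableSet t}))
    {J : Set α} (hJ : MeasurableSet J) (hJ0 : μ J ≠ 0) :
    ∃ A ⊆ J, MeasurableSet A ∧ μ A ≠ 0 ∧
      ∀ x ∈ A, ∀ x' ∈ A, Prod.mk x ⁻¹' E = Prod.mk x' ⁻¹' E := by
  induction hE generalizing J with
  | base E hE =>
    obtain ⟨s, hs, t, -, rfl⟩ := hE
    by_cases h0 : μ (J ∩ s) = 0
    · refine ⟨J \ s, Set.sdiff_subset, hJ.diff hs, ?_, fun x hx x' hx' => ?_⟩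
      · rwa [← measure_inter_add_sdiff J hs, h0, zero_add] at hJ0
      · rw [Set.mk_preimage_prod_right_eq_empty hx.2, Set.mk_preimage_prod_right_eq_empty hx'.2]
    · refine ⟨J ∩ s, Set.inter_subset_left, hJ.inter hs, h0, fun x hx x' hx' => ?_⟩
      rw [Set.mk_preimage_prod_right hx.2, Set.mk_preimage_prod_right hx'.2]
  | empty => exact ⟨J, subset_rfl, hJ, hJ0, fun _ _ _ _ => rfl⟩
  | compl E _ ih =>
    obtain ⟨A, hAJ, hA, hA0, hsec⟩ := ih hJ hJ0
    exact ⟨A, hAJ, hA, hA0, fun x hx x' hx' => congrArg compl (hsec x hx x' hx')⟩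
  | union E E' _ _ ih ih' =>
    obtain ⟨A, hAJ, hA, hA0, hsec⟩ := ih hJ hJ0
    obtain ⟨A', hAA', hA', hA'0, hsec'⟩ := ih' hA hA0
    exact ⟨A', hAA'.trans hAJ, hA', hA'0, fun x hx x' hx' =>
      congrArg₂ (· ∪ ·) (hsec x (hAA' hx) x' (hAA' hx')) (hsec' x hx x' hx')⟩

-- Choose `E` in the algebra of rectangles so close to `B` that `B ∆ E` has small fibers on average.
lemma exists_subset_fiberwiseLE_symmDiff_preimage_snd [IsFiniteMeasure ν] {B : Set (α × β)}
    (hB : MeasurableSet B) (hc : 0 < c) {J : Set α} (hJ : MeasurableSet J) (hJ0 : ν.fst J ≠ 0) :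
    ∃ A ⊆ J, MeasurableSet A ∧ ν.fst A ≠ 0 ∧
      ∃ Q, MeasurableSet Q ∧ FiberwiseLE ν (B ∆ (Prod.snd ⁻¹' Q)) A c := by
  have hdense := Measure.MeasureDense.of_generateFrom_isSetAlgebra_finite (μ := ν)
    isSetAlgebra_generateSetAlgebra
    (generateFrom_prod.symm.trans generateFrom_generateSetAlgebra_eq.symm)
  have hpos : 0 < c * ν.real (Prod.fst ⁻¹' J) := by
    rw [Measure.fst_apply hJ] at hJ0
    have : 0 < ν.real (Prod.fst ⁻¹' J) := ENNReal.toReal_pos hJ0 (measure_ne_top _ _)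
    positivity
  obtain ⟨E, hE, hBE⟩ := hdense.approx B hB (measure_ne_top _ _) _ hpos
  have hlt : ν (B ∆ E) < c * ν.fst J := by
    rwa [ENNReal.ofReal_mul c.coe_nonneg, ENNReal.ofReal_coe_nnreal, ofReal_measureReal,
      ← Measure.fst_apply hJ] at hBE
  obtain ⟨A, hAJ, hA, hA0, hle⟩ := exists_subset_fiberwiseLE hJ hlt
  obtain ⟨A', hA'A, hA', hA'0, hsec⟩ := exists_subset_section_eq ν.fst hE hA hA0
  obtain ⟨x₀, hx₀⟩ := nonempty_of_measure_ne_zero hA'0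
  refine ⟨A', hA'A.trans hAJ, hA', hA'0, Prod.mk x₀ ⁻¹' E,
    measurable_prodMk_left (hdense.measurable E hE), hle.mono hA'A ?_⟩
  rintro ⟨x, y⟩ ⟨hx, hxy⟩
  have hxE : (x, y) ∈ E ↔ (x₀, y) ∈ E := Set.ext_iff.1 (hsec x hx x₀ hx₀) y
  simpa only [Set.mem_symmDiff, Set.mem_preimage, hxE] using hxy

variable {R P : α → α} {B : Set (α × β)}

lemma measurableSet_fiberDiff (hR : Measurable R) (hP : Measurable P) (hB : MeasurableSet B) :
    MeasurableSet (fiberDiff R P B) :=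
  (hR.prodMap measurable_id hB).symmDiff (hP.prodMap measurable_id hB)

lemma FiberwiseLE.fiberDiff {Q : Set β} (h : FiberwiseLE ν (B ∆ (Prod.snd ⁻¹' Q)) A c)
    (hB : MeasurableSet B) (hQ : MeasurableSet Q)
    (hR : MeasurableEmbedding R) (hRν : MeasurePreserving (Prod.map R id) ν ν)
    (hP : MeasurableEmbedding P) (hPν : MeasurePreserving (Prod.map P id) ν ν) :
    FiberwiseLE ν (fiberDiff R P B) (R ⁻¹' A ∩ P ⁻¹' A) (c + c) := by
  have hW : MeasurableSet (B ∆ (Prod.snd ⁻¹' Q)) := hB.symmDiff (measurable_snd hQ)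
  refine (((h.preimage hW hR hRν).mono Set.inter_subset_left Set.inter_subset_right).union
    ((h.preimage hW hP hPν).mono Set.inter_subset_right Set.inter_subset_right)).mono
    subset_rfl ?_
  refine Set.inter_subset_right.trans ?_
  rw [Set.preimage_symmDiff, Set.preimage_symmDiff, symmDiff_comm (Prod.map P id ⁻¹' B)]
  exact symmDiff_triangle _ _ _

end Fibers

section DiagonalAction

variable {α : Type*} {m : MeasurableSpace α} [MeasurableSpace α] {μ : Measure α}
  [IsProbabilityMeasure μ] {ν : Measure (α × α)} {T R P : α → α}

lemma IsRelIndepSquare.measure_inter_symmDiff_le (hν : IsRelIndepSquare m μ ν)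
    (hR : MeasurePreserving R μ μ) (hmR : m ≤ aeInvSigma μ R)
    (hP : MeasurePreserving P μ μ) (hmP : m ≤ aeInvSigma μ P)
    {B : Set (α × α)} (hB : MeasurableSet B) (hPB : Prod.map P P ⁻¹' B = B)
    {J : Set α} (hJ : MeasurableSet[m] J) :
    ν (Prod.fst ⁻¹' J ∩ (Prod.map R R ⁻¹' B) ∆ B) ≤
      ν (Prod.fst ⁻¹' J ∩ fiberDiff R P B) +
        ν (Prod.fst ⁻¹' J ∩ fiberDiff R P (Prod.swap ⁻¹' B)) := by
  have hm := hmR.trans aeInvSigma_le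
  set D := fiberDiff R P B
  set D' := fiberDiff R P (Prod.swap ⁻¹' B)
  have hJD {B' : Set (α × α)} (hB' : MeasurableSet B') :
      NullMeasurableSet (Prod.fst ⁻¹' J ∩ fiberDiff R P B') ν :=
    ((measurable_fst (hm J hJ)).inter
      (measurableSet_fiberDiff hR.measurable hP.measurable hB')).nullMeasurableSet
  have hidR : MeasurePreserving (Prod.map id R) ν ν := hν.measurePreserving_id_prodMap hR hmR
  have hswapP : MeasurePreserving (Prod.swap ∘ Prod.map P id) ν ν :=
    (hν.measurePreserving_swap hm).comp (hν.measurePreserving_prodMap_id hP hmP)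
  have hcover : (Prod.map R R ⁻¹' B) ∆ B ⊆
      Prod.map id R ⁻¹' D ∪ (Prod.swap ∘ Prod.map P id) ⁻¹' D' :=
    calc (Prod.map R R ⁻¹' B) ∆ B = (Prod.map R R ⁻¹' B) ∆ (Prod.map P P ⁻¹' B) := by rw [hPB]
      _ ⊆ _ := symmDiff_triangle _ (Prod.map P R ⁻¹' B) _
  calc ν (Prod.fst ⁻¹' J ∩ (Prod.map R R ⁻¹' B) ∆ B)
      ≤ ν (Prod.fst ⁻¹' J ∩ Prod.map id R ⁻¹' D) +
          ν (Prod.fst ⁻¹' J ∩ (Prod.swap ∘ Prod.map P id) ⁻¹' D') := by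
        refine (measure_mono (Set.inter_subset_inter_right _ hcover)).trans ?_
        rw [Set.inter_union_distrib_left]
        exact measure_union_le _ _
    _ = ν (Prod.map id R ⁻¹' (Prod.fst ⁻¹' J ∩ D)) +
          ν ((Prod.swap ∘ Prod.map P id) ⁻¹' (Prod.fst ⁻¹' J ∩ D')) :=
        congrArg _ (measure_congr
          ((hν.preimage_fst_ae_eq_preimage_snd hm hJ).inter EventuallyEq.rfl))
    _ = ν (Prod.fst ⁻¹' J ∩ D) + ν (Prod.fst ⁻¹' J ∩ D') := by
        rw [hidR.measure_preimage (hJD hB),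
          hswapP.measure_preimage (hJD (measurable_swap hB))]

variable (hT : MeasurePreserving T μ μ) (hTe : MeasurableEmbedding T)
  (hR : MeasurePreserving R μ μ) (hRe : MeasurableEmbedding R) (hTR : Function.Commute T R)
  (hle : aeInvSigma μ T ≤ aeInvSigma μ R) (hν : IsRelIndepSquare (aeInvSigma μ T) μ ν)

include hT hTe hR hRe hTR hle hν

lemma exists_invariant_subset_fiberwiseLE_fiberDiff
    {B : Set (α × α)} (hB : MeasurableSet B) (hTB : Prod.map T T ⁻¹' B = B) {c : ℝ≥0} (hc : 0 < c)
    {J : Set α} (hJ : MeasurableSet[aeInvSigma μ T] J) (hJ0 : μ J ≠ 0) :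
    ∃ n, ∃ J' ⊆ J, MeasurableSet[aeInvSigma μ T] J' ∧ μ J' ≠ 0 ∧
      FiberwiseLE ν (fiberDiff R T^[n] B) J' (c + c) ∧
      FiberwiseLE ν (fiberDiff R T^[n] (Prod.swap ⁻¹' B)) J' (c + c) := by
  have := hν.isProbabilityMeasure aeInvSigma_le
  have hfst := hν.fst_eq aeInvSigma_le
  obtain ⟨A₁, hA₁J, hA₁, hA₁0, Q, hQ, hBQ⟩ :=
    exists_subset_fiberwiseLE_symmDiff_preimage_snd hB hc hJ.1 (hfst.symm ▸ hJ0)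
  obtain ⟨A, hAA₁, hA, hA0, Q', hQ', hBQ'⟩ :=
    exists_subset_fiberwiseLE_symmDiff_preimage_snd (measurable_swap hB) hc hA₁ hA₁0
  obtain ⟨n, hn⟩ :=
    exists_measure_preimage_inter_preimage_iterate_ne_zero hT hR hle hA (hfst ▸ hA0)
  set C := R ⁻¹' A ∩ T^[n] ⁻¹' A
  have hC : MeasurableSet C := (hR.measurable hA).inter (hT.measurable.iterate n hA)
  have hspread {B' : Set (α × α)} {Q : Set α} (hB' : MeasurableSet B') (hQ : MeasurableSet Q)
      (hTB' : Prod.map T T ⁻¹' B' = B') (h : FiberwiseLE ν (B' ∆ (Prod.snd ⁻¹' Q)) A c) :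
      FiberwiseLE ν (fiberDiff R T^[n] B') (⋃ k, T^[k] ⁻¹' C) (c + c) :=
    (h.fiberDiff hB' hQ hRe (hν.measurePreserving_prodMap_id hR hle)
      (measurableEmbedding_iterate hTe n) (hν.measurePreserving_prodMap_id (hT.iterate n)
        (aeInvSigma_le_aeInvSigma_iterate hT.quasiMeasurePreserving n))).iUnion_preimage_iterate
      (measurableSet_fiberDiff hR.measurable (hT.measurable.iterate n) hB') hC hTe
      (hν.measurePreserving_prodMap hT le_rfl)
      (preimage_prodMap_fiberDiff hTR.symm ((Function.Commute.refl T).iterate_left n) hTB')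
  have hCJ : (C ∩ J : Set α) =ᵐ[μ] C := by
    have hCRJ : C ⊆ R ⁻¹' J := fun x hx => hA₁J (hAA₁ hx.1)
    exact (EventuallyEq.rfl.inter (hle J hJ).2.symm).trans
      (EventuallyEq.of_eq (Set.inter_eq_left.2 hCRJ))
  refine ⟨n, (⋃ k, T^[k] ⁻¹' C) ∩ J, Set.inter_subset_right,
    (measurableSet_aeInvSigma_iUnion_preimage_iterate hT hC).inter hJ, fun h0 => hn ?_,
    (hspread hB hQ hTB (hBQ.mono hAA₁ Set.inter_subset_right)).mono Set.inter_subset_left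
      Set.inter_subset_right,
    (hspread (measurable_swap hB) hQ' (congrArg (Prod.swap ⁻¹' ·) hTB) hBQ').mono
      Set.inter_subset_left Set.inter_subset_right⟩
  rw [← measure_congr hCJ]
  exact measure_mono_null
    (Set.inter_subset_inter_left J (Set.subset_iUnion (fun k => T^[k] ⁻¹' C) 0)) h0

lemma exists_invariant_subset_measure_symmDiff_le
    {B : Set (α × α)} (hB : MeasurableSet B) (hTB : Prod.map T T ⁻¹' B = B) {c : ℝ≥0} (hc : 0 < c)
    {J : Set α} (hJ : MeasurableSet[aeInvSigma μ T] J) (hJ0 : μ J ≠ 0) :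
    ∃ J' ⊆ J, MeasurableSet[aeInvSigma μ T] J' ∧ μ J' ≠ 0 ∧
      ν (Prod.fst ⁻¹' J' ∩ (Prod.map R R ⁻¹' B) ∆ B) ≤ c * μ J' := by
  obtain ⟨n, J', hJ'J, hJ', hJ'0, hD, hD'⟩ :=
    exists_invariant_subset_fiberwiseLE_fiberDiff hT hTe hR hRe hTR hle hν hB hTB
      (c := c / 4) (by positivity) hJ hJ0
  refine ⟨J', hJ'J, hJ', hJ'0, ?_⟩
  have hnB : Prod.map T^[n] T^[n] ⁻¹' B = B := by
    rw [← Prod.map_iterate]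
    exact Function.IsFixedPt.preimage_iterate hTB n
  calc ν (Prod.fst ⁻¹' J' ∩ (Prod.map R R ⁻¹' B) ∆ B)
      ≤ ν (Prod.fst ⁻¹' J' ∩ fiberDiff R T^[n] B) +
          ν (Prod.fst ⁻¹' J' ∩ fiberDiff R T^[n] (Prod.swap ⁻¹' B)) :=
        hν.measure_inter_symmDiff_le hR hle (hT.iterate n)
          (aeInvSigma_le_aeInvSigma_iterate hT.quasiMeasurePreserving n) hB hnB hJ'
    _ ≤ (c / 4 + c / 4 : ℝ≥0) * ν.fst J' + (c / 4 + c / 4 : ℝ≥0) * ν.fst J' :=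
        add_le_add (hD J' subset_rfl hJ'.1) (hD' J' subset_rfl hJ'.1)
    _ = c * μ J' := by
        rw [← add_mul, ← ENNReal.coe_add, hν.fst_eq aeInvSigma_le]
        congr 2
        ring

lemma aeInvSigma_prodMap_le_aeInvSigma_prodMap :
    aeInvSigma ν (Prod.map T T) ≤ aeInvSigma ν (Prod.map R R) := by
  have := hν.isProbabilityMeasure aeInvSigma_le
  have hTT := hν.measurePreserving_prodMap hT le_rfl
  have hRR := hν.measurePreserving_prodMap hR hle
  refine aeInvSigma_le_of_forall_preimage_eq hTT.quasiMeasurePreserving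
    hRR.quasiMeasurePreserving fun B hB hTB => measure_symmDiff_eq_zero_iff.1 ?_
  set W := (Prod.map R R ⁻¹' B) ∆ B
  have hac : (ν.restrict W).fst ≪ μ := by
    conv_rhs => rw [← hν.fst_eq aeInvSigma_le]
    exact Measure.restrict_le_self.absolutelyContinuous.map measurable_fst
  suffices h : ∀ c : ℝ≥0, 0 < c → ν W ≤ c from
    nonpos_iff_eq_zero.1 (ENNReal.le_of_forall_pos_le_add fun c hc _ => (h c hc).trans le_add_self)
  intro c hc
  have hle' : (ν.restrict W).fst Set.univ ≤ (c • μ) Set.univ := by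
    refine measure_univ_le_of_forall_exists_subset (m := aeInvSigma μ T) aeInvSigma_le
      (hac.trans (Measure.absolutelyContinuous_smul (ENNReal.coe_ne_zero.2 hc.ne')))
      fun J hJ hJ0 => ?_
    obtain ⟨J', hJ'J, hJ', hJ'0, hsmall⟩ := exists_invariant_subset_measure_symmDiff_le
      hT hTe hR hRe hTR hle hν hB hTB (half_pos hc) hJ (right_ne_zero_of_mul hJ0)
    refine ⟨J', hJ'J, hJ', ?_⟩
    rw [fst_restrict_apply hJ'.1]
    exact hsmall.trans_lt ((ENNReal.mul_lt_mul_iff_left hJ'0 (measure_ne_top _ _)).2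
      (ENNReal.coe_lt_coe.2 (half_lt_self hc)))
  simpa [fst_restrict_apply] using hle'

end DiagonalAction

namespace HKBox

variable {X : Type*} {T S : X → X}

lemma measurableEmbedding_map [MeasurableSpace X] (hT : MeasurableEmbedding T) (k : ℕ) :
    MeasurableEmbedding (HKBox.map T k) := by
  induction k with
  | zero => exact hT
  | succ k ih => exact ih.prodMap ih

lemma commute_map (h : Function.Commute T S) (k : ℕ) :
    Function.Commute (HKBox.map T k) (HKBox.map S k) := by
  induction k with
  | zero => exact h
  | succ k ih => exact fun p => Prod.ext (ih p.1) (ih p.2)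

end HKBox

lemma IsHKSeq.isRelIndepSquare {X : Type*} [MeasurableSpace X] {μ : Measure X} {T : X → X}
    {ν : ∀ k, Measure (HKBox X k)} (hν : IsHKSeq μ T ν) (k : ℕ) [IsFiniteMeasure (ν k)]
    (hT : Measure.QuasiMeasurePreserving (HKBox.map T k) (ν k) (ν k)) :
    IsRelIndepSquare (aeInvSigma (ν k) (HKBox.map T k)) (ν k) (ν (k + 1)) :=
  (isRelIndepSquare_of_forall_integral_mul_eq (hν.2 k)).of_invSigma hT

section CommutingSystems

variable {X : Type*} [MeasurableSpace X]
  {μ : Measure X} [IsProbabilityMeasure μ] {T S : X → X}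
  (hT : MeasurePreserving T μ μ) (hTe : MeasurableEmbedding T)
  (hS : MeasurePreserving S μ μ) (hSe : MeasurableEmbedding S)
  (hTS : Function.Commute T S) (hinv : aeInvSigma μ T = aeInvSigma μ S)
  {νT νS : ∀ k, Measure (HKBox X k)} (hνT : IsHKSeq μ T νT) (hνS : IsHKSeq μ S νS)

include hT hTe hS hSe hTS hinv hνT hνS

lemma IsHKSeq.eq_of_commute_of_aeInvSigma_eq : νT = νS := by
  suffices h : ∀ k, νT k = νS k ∧ IsProbabilityMeasure (νT k) ∧
      MeasurePreserving (HKBox.map T k) (νT k) (νT k) ∧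
      MeasurePreserving (HKBox.map S k) (νT k) (νT k) ∧
      aeInvSigma (νT k) (HKBox.map T k) = aeInvSigma (νT k) (HKBox.map S k) from
    funext fun k => (h k).1
  intro k
  induction k with
  | zero =>
    rw [hνT.1, hνS.1]
    exact ⟨rfl, ‹_›, hT, hS, hinv⟩
  | succ k ih =>
    obtain ⟨heq, hprob, hTk, hSk, hinvk⟩ := ih
    have hTe' := HKBox.measurableEmbedding_map hTe k
    have hSe' := HKBox.measurableEmbedding_map hSe k
    have hcomm := HKBox.commute_map hTS k
    have hsqT := hνT.isRelIndepSquare k hTk.quasiMeasurePreserving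
    have hsqS : IsRelIndepSquare (aeInvSigma (νT k) (HKBox.map S k)) (νT k) (νS (k + 1)) := by
      rw [heq] at hprob hSk ⊢
      exact hνS.isRelIndepSquare k hSk.quasiMeasurePreserving
    exact ⟨hsqT.unique (hinvk ▸ hsqS) aeInvSigma_le, hsqT.isProbabilityMeasure aeInvSigma_le,
      hsqT.measurePreserving_prodMap hTk le_rfl, hsqT.measurePreserving_prodMap hSk hinvk.le,
      (aeInvSigma_prodMap_le_aeInvSigma_prodMap hTk hTe' hSk hSe' hcomm hinvk.le hsqT).antisymm
        (aeInvSigma_prodMap_le_aeInvSigma_prodMap hSk hSe' hTk hTe' hcomm.symm hinvk.ge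
          (hinvk ▸ hsqT))⟩

theorem seminorms_eq_of_commuting_general : HKseminorm νT = HKseminorm νS := by
  rw [hνT.eq_of_commute_of_aeInvSigma_eq hT hTe hS hSe hTS hinv hνS]

end CommutingSystems

/-- For commuting invertible ergodic measure preserving transformations `T` and `S` of a
probability space, the Host–Kra seminorms agree: `⦀f⦀_{k,T} = ⦀f⦀_{k,S}` for all `k ≥ 1`
and all `f ∈ L^∞(μ)`. -/
theorem seminorms_eq_of_commuting {X : Type*} [MeasurableSpace X]
    (μ : Measure X) [IsProbabilityMeasure μ]
    (T S T' S' : X → X) (hT' : Measurable T') (hS' : Measurable S')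
    (hTinv : Function.LeftInverse T' T ∧ Function.RightInverse T' T)
    (hSinv : Function.LeftInverse S' S ∧ Function.RightInverse S' S)
    (hcomm : T ∘ S = S ∘ T)
    (hergT : Ergodic T μ) (hergS : Ergodic S μ)
    (νT νS : ∀ k, Measure (HKBox X k))
    (hνT : IsHKSeq μ T νT) (hνS : IsHKSeq μ S νS) :
    ∀ k, 1 ≤ k → ∀ f : X → ℝ, Measurable f → (∃ C, ∀ x, |f x| ≤ C) →
      HKseminorm νT k f = HKseminorm νS k f := by
  have hTe : MeasurableEmbedding T :=
    MeasurableEquiv.measurableEmbedding ⟨⟨T, T', hTinv.1, hTinv.2⟩, hergT.measurable, hT'⟩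
  have hSe : MeasurableEmbedding S :=
    MeasurableEquiv.measurableEmbedding ⟨⟨S, S', hSinv.1, hSinv.2⟩, hergS.measurable, hS'⟩
  have hinv : aeInvSigma μ T = aeInvSigma μ S :=
    aeInvSigma_eq_of_quasiErgodic hergT.quasiErgodic hergS.quasiErgodic
  intro k _ f _ _
  rw [seminorms_eq_of_commuting_general hergT.toMeasurePreserving hTe hergS.toMeasurePreserving hSe
    (congrFun hcomm) hinv hνT hνS]
end
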